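/- arXiv:math/0502128 — 2 statements merged into one kernel-verified Lean document; each statement's English description precedes it below -/
import Mathlib

section
/- Let (U, •, g̃, E) be a weak F-manifold, where U is a nonempty connected open subset of ℝ^n with n ≥ 3, with L_E g̃ = D̃·g̃ and L_E(•) = k·• for smooth functions D̃, k on U. Then k is constant on U (i.e. the Euler vector field rescales the multiplication • by a constant). -/
open scoped BigOperators

noncomputable section

/-- Points of ℝⁿ. -/
abbrev Pt (n : ℕ) := Fin n → ℝ
/-- Vector fields (globally defined functions; conditions are imposed on an open set). -/
abbrev VF (n : ℕ) := Pt n → Fin n → ℝ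
/-- 1-forms. -/
abbrev OneForm (n : ℕ) := Pt n → Fin n → ℝ
/-- Metrics: smooth maps into symmetric invertible matrices. -/
abbrev Met (n : ℕ) := Pt n → Matrix (Fin n) (Fin n) ℝ
/-- (1,2)-tensor fields (multiplications on tangent vectors): components `c t k i j` = c^k_{ij}(t). -/
abbrev Mul2 (n : ℕ) := Pt n → Fin n → Fin n → Fin n → ℝ

variable {n : ℕ}

/-- Partial derivative ∂ᵢ f (t). -/
def pder (i : Fin n) (f : Pt n → ℝ) (t : Pt n) : ℝ :=
  fderiv ℝ f t (Pi.single i 1)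

/-- Smoothness (on `U`) of a vector field or a 1-form. -/
def SmoothVF (U : Set (Pt n)) (X : VF n) : Prop :=
  ∀ k, ContDiffOn ℝ (⊤ : ℕ∞) (fun t => X t k) U

def SmoothMet (U : Set (Pt n)) (g : Met n) : Prop :=
  ∀ i j, ContDiffOn ℝ (⊤ : ℕ∞) (fun t => g t i j) U

def SmoothMul2 (U : Set (Pt n)) (c : Mul2 n) : Prop :=
  ∀ k i j, ContDiffOn ℝ (⊤ : ℕ∞) (fun t => c t k i j) U

/-- `g` is a (pseudo-Riemannian) metric on `U`: smooth, symmetric, invertible. -/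
def IsMetricOn (U : Set (Pt n)) (g : Met n) : Prop :=
  SmoothMet U g ∧ ∀ t ∈ U, (g t).IsSymm ∧ IsUnit (g t)

/-- The 1-form g(X). -/
def mdown (g : Met n) (X : VF n) : OneForm n := fun t k => ∑ j, g t k j * X t j
/-- The vector field g*α. -/
def mup (g : Met n) (α : OneForm n) : VF n := fun t k => ∑ j, (g t)⁻¹ k j * α t j
/-- g*(α, β). -/
def mup2 (g : Met n) (α β : OneForm n) (t : Pt n) : ℝ :=
  ∑ i, ∑ j, (g t)⁻¹ i j * α t i * β t j
/-- g(X, Y). -/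
def mdown2 (g : Met n) (X Y : VF n) (t : Pt n) : ℝ :=
  ∑ i, ∑ j, g t i j * X t i * Y t j

/-- Christoffel symbols Γ(g)^k_{ij}(t). -/
def chr (g : Met n) (k i j : Fin n) (t : Pt n) : ℝ :=
  (1/2) * ∑ l, (g t)⁻¹ k l *
    (pder i (fun s => g s j l) t + pder j (fun s => g s i l) t - pder l (fun s => g s i j) t)

/-- Levi-Civita covariant derivative ∇^g_X Y of a vector field. -/
def covV (g : Met n) (X Y : VF n) : VF n :=
  fun t k => ∑ i, X t i * (pder i (fun s => Y s k) t + ∑ m, chr g k i m t * Y t m)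

/-- Levi-Civita covariant derivative ∇^g_X α of a 1-form. -/
def covF (g : Met n) (X : VF n) (α : OneForm n) : OneForm n :=
  fun t k => ∑ i, X t i * (pder i (fun s => α s k) t - ∑ m, chr g m i k t * α t m)

/-- Lie bracket [X, Y]. -/
def vbr (X Y : VF n) : VF n :=
  fun t k => ∑ i, (X t i * pder i (fun s => Y s k) t - Y t i * pder i (fun s => X s k) t)

/-- Curvature R(g)_{X,Y} Z = ∇_X ∇_Y Z − ∇_Y ∇_X Z − ∇_{[X,Y]} Z. -/
def curvV (g : Met n) (X Y Z : VF n) : VF n :=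
  fun t k => covV g X (covV g Y Z) t k - covV g Y (covV g X Z) t k
    - covV g (vbr X Y) Z t k

/-- Curvature acting on 1-forms: (R(g)_{X,Y} α)(Z) = −α(R(g)_{X,Y} Z). -/
def curvF (g : Met n) (X Y : VF n) (α : OneForm n) : OneForm n :=
  fun t k => - ∑ m, α t m * curvV g X Y (fun _ => Pi.single k 1) t m

/-- `g` is flat on `U`: the curvature tensor vanishes identically. -/
def FlatOn (U : Set (Pt n)) (g : Met n) : Prop :=
  ∀ X Y Z : VF n, SmoothVF U X → SmoothVF U Y → SmoothVF U Z →
    ∀ t ∈ U, ∀ k, curvV g X Y Z t k = 0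

/-- `g` has constant sectional curvature `s` on `U`. -/
def ConstSecCurv (U : Set (Pt n)) (g : Met n) (s : ℝ) : Prop :=
  ∀ X Y : VF n, SmoothVF U X → SmoothVF U Y → ∀ t ∈ U,
    mdown2 g (curvV g X Y Y) X t
      = s * (mdown2 g X X t * mdown2 g Y Y t - (mdown2 g X Y t) ^ 2)

/-- The metric g_λ of the pencil: its inverse matrix is g⁻¹ + λ g̃⁻¹. -/
def pencil (g g' : Met n) (lam : ℝ) : Met n :=
  fun t => ((g t)⁻¹ + lam • (g' t)⁻¹)⁻¹

/-- Almost compatibility of the pair (g, g̃) on `U`. -/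
def AlmostCompatible (U : Set (Pt n)) (g g' : Met n) : Prop :=
  ∀ lam : ℝ, (∀ t ∈ U, IsUnit ((g t)⁻¹ + lam • (g' t)⁻¹)) →
    ∀ X : VF n, SmoothVF U X → ∀ α : OneForm n, SmoothVF U α →
      ∀ t ∈ U, ∀ k,
        mup (pencil g g' lam) (covF (pencil g g' lam) X α) t k
          = mup g (covF g X α) t k + lam * mup g' (covF g' X α) t k

/-- Compatibility of the pair (g, g̃) on `U`. -/
def Compatible (U : Set (Pt n)) (g g' : Met n) : Prop :=
  AlmostCompatible U g g' ∧
  ∀ lam : ℝ, (∀ t ∈ U, IsUnit ((g t)⁻¹ + lam • (g' t)⁻¹)) →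
    ∀ X Y : VF n, SmoothVF U X → SmoothVF U Y →
      ∀ α : OneForm n, SmoothVF U α →
        ∀ t ∈ U, ∀ k,
          mup (pencil g g' lam) (curvF (pencil g g' lam) X Y α) t k
            = mup g (curvF g X Y α) t k + lam * mup g' (curvF g' X Y α) t k

/-- The multiplication α ∘ β = ∇^g_{g*α} β − ∇^{g̃}_{g*α} β on 1-forms. -/
def circM (g g' : Met n) (α β : OneForm n) : OneForm n :=
  fun t k => covF g (mup g α) β t k - covF g' (mup g α) β t k

/-- The endomorphism T(u) = g(E) ∘ u of 1-forms, as a pointwise matrix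
(`∘` being tensorial in its second argument). -/
def Tmat (g g' : Met n) (E : VF n) (t : Pt n) : Matrix (Fin n) (Fin n) ℝ :=
  Matrix.of fun k m => circM g g' (mdown g E) (fun _ => Pi.single m 1) t k

/-- The triple (g, g̃, E) is regular on `U` if T is invertible at every point. -/
def RegularTriple (U : Set (Pt n)) (g g' : Met n) (E : VF n) : Prop :=
  ∀ t ∈ U, IsUnit (Tmat g g' E t)

/-- T⁻¹(v). -/
def TinvF (g g' : Met n) (E : VF n) (v : OneForm n) : OneForm n :=
  fun t k => ∑ m, (Tmat g g' E t)⁻¹ k m * v t m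

/-- The multiplication u • v = u ∘ T⁻¹(v) on 1-forms. -/
def bulF (g g' : Met n) (E : VF n) (u v : OneForm n) : OneForm n :=
  circM g g' u (TinvF g g' E v)

/-- The multiplication • on vector fields: X • Y = g̃*((g̃X) • (g̃Y)). -/
def bulV (g g' : Met n) (E : VF n) (X Y : VF n) : VF n :=
  mup g' (bulF g g' E (mdown g' X) (mdown g' Y))

/-- The multiplication • associated to the regular triple (g, g̃, E), as a (1,2)-tensor. -/
def bulMul (g g' : Met n) (E : VF n) : Mul2 n :=
  fun t k i j => bulV g g' E (fun _ => Pi.single i 1) (fun _ => Pi.single j 1) t k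

/-- Applying a (1,2)-tensor to vector fields. -/
def mapp (c : Mul2 n) (X Y : VF n) : VF n :=
  fun t k => ∑ i, ∑ j, c t k i j * X t i * Y t j

/-- Transporting a multiplication on tangent vectors to a multiplication
on 1-forms via the metric: u • v := g̃((g̃*u) • (g̃*v)). -/
def formMul (g' : Met n) (c : Mul2 n) (u v : OneForm n) : OneForm n :=
  mdown g' (mapp c (mup g' u) (mup g' v))

/-- Lie derivative of a function. -/
def lieFun (E : VF n) (φ : Pt n → ℝ) : Pt n → ℝ :=
  fun t => ∑ i, E t i * pder i φ t

/-- Lie derivative of a 1-form: (L_E α)(X) = E(α(X)) − α([E,X]). -/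
def lieOne (E : VF n) (α : OneForm n) : OneForm n :=
  fun t k => (∑ i, E t i * pder i (fun s => α s k) t) + ∑ i, α t i * pder k (fun s => E s i) t

/-- Lie derivative of a metric: (L_E g)(X,Y) = E(g(X,Y)) − g([E,X],Y) − g(X,[E,Y]). -/
def lieMet (E : VF n) (g : Met n) : Met n := fun t =>
  Matrix.of fun k j =>
    (∑ i, E t i * pder i (fun s => g s k j) t)
    + (∑ i, g t i j * pder k (fun s => E s i) t)
    + (∑ i, g t k i * pder j (fun s => E s i) t)

/-- Lie derivative of a multiplication ((1,2)-tensor):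
(L_E c)(u,v) = L_E(c(u,v)) − c(L_E u, v) − c(u, L_E v), componentwise. -/
def lieMul (E : VF n) (c : Mul2 n) : Mul2 n :=
  fun t k i j =>
    vbr E (mapp c (fun _ => Pi.single i 1) (fun _ => Pi.single j 1)) t k
    - mapp c (vbr E (fun _ => Pi.single i 1)) (fun _ => Pi.single j 1) t k
    - mapp c (fun _ => Pi.single i 1) (vbr E (fun _ => Pi.single j 1)) t k

/-- Lie derivative of a multiplication on 1-forms (applied to the pencil multiplication ∘). -/
def lieCirc (E : VF n) (g g' : Met n) (u v : OneForm n) : OneForm n :=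
  fun t k => lieOne E (circM g g' u v) t k - circM g g' (lieOne E u) v t k
    - circM g g' u (lieOne E v) t k

/-- ∇^g_X(•)(Y,Z) := ∇^g_X(Y•Z) − (∇^g_X Y)•Z − Y•(∇^g_X Z), for a multiplication c. -/
def covMul (g : Met n) (c : Mul2 n) (X Y Z : VF n) : VF n :=
  fun t k => covV g X (mapp c Y Z) t k - mapp c (covV g X Y) Z t k
    - mapp c Y (covV g X Z) t k

/-- The (4,0)-tensor ∇^g(•)(X,Y,Z,V) := g(∇^g_X(•)(Y,Z), V). -/
def covMul4 (g : Met n) (c : Mul2 n) (X Y Z V : VF n) (t : Pt n) : ℝ :=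
  mdown2 g (covMul g c X Y Z) V t

/-- Total symmetry of the (4,0)-tensor ∇^g(•) (the F-manifold condition). -/
def TotSym (U : Set (Pt n)) (g : Met n) (c : Mul2 n) : Prop :=
  ∀ X Y Z V : VF n, SmoothVF U X → SmoothVF U Y → SmoothVF U Z → SmoothVF U V →
    ∀ t ∈ U,
      covMul4 g c X Y Z V t = covMul4 g c Y X Z V t ∧
      covMul4 g c X Y Z V t = covMul4 g c X Z Y V t ∧
      covMul4 g c X Y Z V t = covMul4 g c X Y V Z t

/-- Weak F-manifold structure (U, •, g̃, E), with identity `e`, •-inverse `Einv` of E,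
and rescaling functions `Dt` (for the metric) and `k` (for the multiplication). -/
structure IsWeakF (U : Set (Pt n)) (c : Mul2 n) (g' : Met n) (E e Einv : VF n)
    (Dt k : Pt n → ℝ) : Prop where
  met : IsMetricOn U g'
  smooth_c : SmoothMul2 U c
  smooth_E : SmoothVF U E
  smooth_e : SmoothVF U e
  smooth_Einv : SmoothVF U Einv
  smooth_Dt : ContDiffOn ℝ (⊤ : ℕ∞) Dt U
  smooth_k : ContDiffOn ℝ (⊤ : ℕ∞) k U
  comm : ∀ t ∈ U, ∀ a i j, c t a i j = c t a j i
  assoc : ∀ t ∈ U, ∀ a x y z, (∑ m, c t a m z * c t m x y) = ∑ m, c t a x m * c t m y z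
  unit : ∀ t ∈ U, ∀ a i, (∑ j, c t a j i * e t j) = if a = i then (1 : ℝ) else 0
  invar : ∀ t ∈ U, ∀ x y z, (∑ m, g' t m z * c t m x y) = ∑ m, g' t x m * c t m y z
  lie_g : ∀ t ∈ U, ∀ i j, lieMet E g' t i j = Dt t * g' t i j
  lie_c : ∀ t ∈ U, ∀ a i j, lieMul E c t a i j = k t * c t a i j
  e_inv : ∀ t ∈ U, ∀ a, (∑ i, ∑ j, c t a i j * E t i * Einv t j) = e t a
  sym_E : ∀ Y Z V : VF n, SmoothVF U Y → SmoothVF U Z → SmoothVF U V → ∀ t ∈ U,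
    covMul4 g' c E Y Z V t = covMul4 g' c Y E Z V t

/-- Weak quasi-homogeneous pencil (h, h̃) with Euler vector field E. -/
structure IsWQH (U : Set (Pt n)) (h h' : Met n) (E : VF n) (D Dt : Pt n → ℝ) : Prop where
  met_h : IsMetricOn U h
  met_h' : IsMetricOn U h'
  compat : Compatible U h h'
  smooth_E : SmoothVF U E
  smooth_D : ContDiffOn ℝ (⊤ : ℕ∞) D U
  smooth_Dt : ContDiffOn ℝ (⊤ : ℕ∞) Dt U
  lie_h' : ∀ t ∈ U, ∀ i j, lieMet E h' t i j = Dt t * h' t i j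
  cov_E : ∀ X : VF n, SmoothVF U X → ∀ t ∈ U, ∀ a, covV h X E t a = (D t / 2) * X t a
  diff_const : ∃ c₀ : ℝ, ∀ t ∈ U, Dt t - D t = c₀

/-- Frobenius manifold structure (U, •, g̃, E). -/
structure IsFrob (U : Set (Pt n)) (c : Mul2 n) (g' : Met n) (E e : VF n) (D k : ℝ) : Prop where
  met : IsMetricOn U g'
  flat : FlatOn U g'
  smooth_c : SmoothMul2 U c
  smooth_E : SmoothVF U E
  smooth_e : SmoothVF U e
  comm : ∀ t ∈ U, ∀ a i j, c t a i j = c t a j i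
  assoc : ∀ t ∈ U, ∀ a x y z, (∑ m, c t a m z * c t m x y) = ∑ m, c t a x m * c t m y z
  unit : ∀ t ∈ U, ∀ a i, (∑ j, c t a j i * e t j) = if a = i then (1 : ℝ) else 0
  invar : ∀ t ∈ U, ∀ x y z, (∑ m, g' t m z * c t m x y) = ∑ m, g' t x m * c t m y z
  e_par : ∀ X : VF n, SmoothVF U X → ∀ t ∈ U, ∀ a, covV g' X e t a = 0
  tot_sym : TotSym U g' c
  nabla2E : ∀ X Y : VF n, SmoothVF U X → SmoothVF U Y → ∀ t ∈ U, ∀ a,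
    covV g' X (covV g' Y E) t a - covV g' (covV g' X Y) E t a = 0
  lie_g : ∀ t ∈ U, ∀ i j, lieMet E g' t i j = D * g' t i j
  lie_c : ∀ t ∈ U, ∀ a i j, lieMul E c t a i j = k * c t a i j

/-- The intersection metric `g` of a Frobenius manifold: g*g̃ = E•, together with
its standard properties. -/
structure IsIntersection (U : Set (Pt n)) (c : Mul2 n) (g g' : Met n) (E : VF n)
    (d : ℝ) : Prop where
  met : IsMetricOn U g
  defn : ∀ t ∈ U, ∀ a j, (∑ l, (g t)⁻¹ a l * g' t l j) = ∑ i, c t a i j * E t i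
  lie_g : ∀ t ∈ U, ∀ i j, lieMet E g t i j = (1 - d) * g t i j
  compat : Compatible U g g'
  regular : RegularTriple U g g' E
  mul_eq : ∀ t ∈ U, ∀ a i j, bulMul g g' E t a i j = c t a i j

/-! ### Smooth functions and partial derivatives -/

/-- Smoothness (on `U`) of a real-valued function. -/
abbrev SmoothFn (U : Set (Pt n)) (f : Pt n → ℝ) : Prop := ContDiffOn ℝ (⊤ : ℕ∞) f U

theorem SmoothFn.contDiffAt {U : Set (Pt n)} {f : Pt n → ℝ} (hU : IsOpen U)
    (hf : SmoothFn U f) {t : Pt n} (ht : t ∈ U) : ContDiffAt ℝ (⊤ : ℕ∞) f t :=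
  ContDiffOn.contDiffAt hf (hU.mem_nhds ht)

theorem SmoothFn.differentiableAt {U : Set (Pt n)} {f : Pt n → ℝ} (hU : IsOpen U)
    (hf : SmoothFn U f) {t : Pt n} (ht : t ∈ U) : DifferentiableAt ℝ f t :=
  (hf.contDiffAt hU ht).differentiableAt (by simp)

theorem SmoothFn.pder {U : Set (Pt n)} {f : Pt n → ℝ} (hU : IsOpen U)
    (hf : SmoothFn U f) (i : Fin n) : SmoothFn U (pder i f) :=
  (hf.fderiv_of_isOpen hU (m := (⊤ : ℕ∞)) (by norm_cast)).clm_apply contDiffOn_const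

theorem SmoothFn.mul {U : Set (Pt n)} {f h : Pt n → ℝ} (hf : SmoothFn U f)
    (hh : SmoothFn U h) : SmoothFn U (fun s => f s * h s) :=
  ContDiffOn.mul hf hh

theorem SmoothFn.add {U : Set (Pt n)} {f h : Pt n → ℝ} (hf : SmoothFn U f)
    (hh : SmoothFn U h) : SmoothFn U (fun s => f s + h s) :=
  ContDiffOn.add hf hh

theorem SmoothFn.sum {U : Set (Pt n)} {f : Fin n → Pt n → ℝ} (hf : ∀ a, SmoothFn U (f a)) :
    SmoothFn U (fun s => ∑ a, f a s) :=
  ContDiffOn.sum fun a _ => hf a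

theorem pder_add (i : Fin n) {f h : Pt n → ℝ} {t : Pt n} (hf : DifferentiableAt ℝ f t)
    (hh : DifferentiableAt ℝ h t) :
    pder i (fun s => f s + h s) t = pder i f t + pder i h t := by
  simp only [pder]
  rw [fderiv_fun_add hf hh]
  rfl

theorem pder_sub (i : Fin n) {f h : Pt n → ℝ} {t : Pt n} (hf : DifferentiableAt ℝ f t)
    (hh : DifferentiableAt ℝ h t) :
    pder i (fun s => f s - h s) t = pder i f t - pder i h t := by
  simp only [pder]
  rw [fderiv_fun_sub hf hh]
  rfl

theorem pder_mul (i : Fin n) {f h : Pt n → ℝ} {t : Pt n} (hf : DifferentiableAt ℝ f t)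
    (hh : DifferentiableAt ℝ h t) :
    pder i (fun s => f s * h s) t = pder i f t * h t + f t * pder i h t := by
  simp only [pder]
  rw [fderiv_fun_mul hf hh]
  simp
  ring

theorem pder_sum (i : Fin n) {f : Fin n → Pt n → ℝ} {t : Pt n}
    (hf : ∀ a, DifferentiableAt ℝ (f a) t) :
    pder i (fun s => ∑ a, f a s) t = ∑ a, pder i (f a) t := by
  simp only [pder]
  rw [fderiv_fun_sum fun a _ => hf a]
  simp

theorem pder_const (i : Fin n) (r : ℝ) (t : Pt n) : pder i (fun _ => r) t = 0 := by
  simp [pder]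

theorem pder_congr {U : Set (Pt n)} (hU : IsOpen U) (i : Fin n) {f h : Pt n → ℝ}
    (hfh : ∀ s ∈ U, f s = h s) {t : Pt n} (ht : t ∈ U) : pder i f t = pder i h t := by
  have : f =ᶠ[nhds t] h := Filter.eventuallyEq_of_mem (hU.mem_nhds ht) hfh
  simp only [pder, this.fderiv_eq]

theorem pder_comm {U : Set (Pt n)} (hU : IsOpen U) {f : Pt n → ℝ} (hf : SmoothFn U f)
    (i j : Fin n) {t : Pt n} (ht : t ∈ U) : pder i (pder j f) t = pder j (pder i f) t := by
  have hd : DifferentiableAt ℝ (fderiv ℝ f) t :=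
    ((hf.contDiffAt hU ht).fderiv_right (m := 1) (by norm_cast)).differentiableAt (by simp)
  have hs : IsSymmSndFDerivAt ℝ f t :=
    (hf.contDiffAt hU ht).isSymmSndFDerivAt (by
      simpa using (WithTop.coe_le_coe.2 le_top : ((2 : ℕ∞) : WithTop ℕ∞) ≤ ((⊤ : ℕ∞) : WithTop ℕ∞)))
  have key (a b : Fin n) : pder a (pder b f) t
      = fderiv ℝ (fderiv ℝ f) t (Pi.single a 1) (Pi.single b 1) := by
    change fderiv ℝ (fun s => fderiv ℝ f s (Pi.single b 1)) t (Pi.single a 1) = _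
    rw [fderiv_clm_apply hd (differentiableAt_const _)]
    simp
  rw [key, key, hs.eq]

/-- Two double sums agree if their symmetrized summands do. -/
theorem sum_sum_eq_of_symm {f h : Fin n → Fin n → ℝ}
    (hfh : ∀ a b, f a b + f b a = h a b + h b a) :
    ∑ a, ∑ b, f a b = ∑ a, ∑ b, h a b := by
  have hf : ∑ a, ∑ b, f a b = ∑ a, ∑ b, f b a := Finset.sum_comm
  have hh : ∑ a, ∑ b, h a b = ∑ a, ∑ b, h b a := Finset.sum_comm
  have : ∑ a, ∑ b, (f a b + f b a) = ∑ a, ∑ b, (h a b + h b a) := by simp only [hfh]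
  simp only [Finset.sum_add_distrib] at this
  linarith

/-! ### Lie derivatives in coordinates -/

theorem SmoothMet.lieMet {U : Set (Pt n)} (hU : IsOpen U) {X : VF n} {g : Met n}
    (hX : SmoothVF U X) (hg : SmoothMet U g) : SmoothMet U (lieMet X g) := fun i j =>
  (((SmoothFn.sum fun a => (hX a).mul (SmoothFn.pder hU (hg i j) a)).add
    (SmoothFn.sum fun a => SmoothFn.mul (hg a j) (SmoothFn.pder hU (hX a) i))).add
    (SmoothFn.sum fun a => SmoothFn.mul (hg i a) (SmoothFn.pder hU (hX a) j)))

theorem pder_lieMet {U : Set (Pt n)} (hU : IsOpen U) {X : VF n} {g : Met n}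
    (hX : SmoothVF U X) (hg : SmoothMet U g) (b i j : Fin n) {t : Pt n} (ht : t ∈ U) :
    pder b (fun s => lieMet X g s i j) t
      = ∑ a, (pder b (fun s => X s a) t * pder a (fun s => g s i j) t
            + X t a * pder b (pder a (fun s => g s i j)) t
          + (pder b (fun s => g s a j) t * pder i (fun s => X s a) t
            + g t a j * pder b (pder i (fun s => X s a)) t)
          + (pder b (fun s => g s i a) t * pder j (fun s => X s a) t
            + g t i a * pder b (pder j (fun s => X s a)) t)) := by
  have dX (a) := SmoothFn.differentiableAt hU (hX a) ht
  have dg (i j) := SmoothFn.differentiableAt hU (hg i j) ht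
  have dX' (a i) := SmoothFn.differentiableAt hU (SmoothFn.pder hU (hX a) i) ht
  have dg' (i j a) := SmoothFn.differentiableAt hU (SmoothFn.pder hU (hg i j) a) ht
  simp only [lieMet, Matrix.of_apply, ← Finset.sum_add_distrib]
  rw [pder_sum]
  · refine Finset.sum_congr rfl fun a _ => ?_
    rw [pder_add, pder_add, pder_mul, pder_mul, pder_mul]
    all_goals first
      | exact dX _ | exact dg _ _ | exact dX' _ _ | exact dg' _ _ _
      | exact (dX _).mul (dg' _ _ _)
      | exact (dg _ _).mul (dX' _ _)
      | exact ((dX _).mul (dg' _ _ _)).add ((dg _ _).mul (dX' _ _))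
  · exact fun a => (((dX _).mul (dg' _ _ _)).add ((dg _ _).mul (dX' _ _))).add
      ((dg _ _).mul (dX' _ _))

theorem pder_vbr {U : Set (Pt n)} (hU : IsOpen U) {X Y : VF n}
    (hX : SmoothVF U X) (hY : SmoothVF U Y) (i a : Fin n) {t : Pt n} (ht : t ∈ U) :
    pder i (fun s => vbr X Y s a) t
      = ∑ b, (pder i (fun s => X s b) t * pder b (fun s => Y s a) t
            + X t b * pder i (pder b (fun s => Y s a)) t
          - (pder i (fun s => Y s b) t * pder b (fun s => X s a) t
            + Y t b * pder i (pder b (fun s => X s a)) t)) := by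
  have dX (a) := SmoothFn.differentiableAt hU (hX a) ht
  have dY (a) := SmoothFn.differentiableAt hU (hY a) ht
  have dX' (a i) := SmoothFn.differentiableAt hU (SmoothFn.pder hU (hX a) i) ht
  have dY' (a i) := SmoothFn.differentiableAt hU (SmoothFn.pder hU (hY a) i) ht
  simp only [vbr]
  rw [pder_sum]
  · refine Finset.sum_congr rfl fun b _ => ?_
    rw [pder_sub, pder_mul _ (dX _) (dY' _ _), pder_mul _ (dY _) (dX' _ _)]
    exacts [(dX _).mul (dY' _ _), (dY _).mul (dX' _ _)]
  · exact fun a => ((dX _).mul (dY' _ _)).sub ((dY _).mul (dX' _ _))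

/-- `L_X L_Y g - L_Y L_X g = L_{[X,Y]} g`. -/
theorem lieMet_lieMet_sub {U : Set (Pt n)} (hU : IsOpen U) {X Y : VF n} {g : Met n}
    (hX : SmoothVF U X) (hY : SmoothVF U Y) (hg : SmoothMet U g) {t : Pt n} (ht : t ∈ U)
    (i j : Fin n) :
    lieMet X (lieMet Y g) t i j
      = lieMet Y (lieMet X g) t i j + lieMet (vbr X Y) g t i j := by
  have cX (a b d : Fin n) : pder a (pder b (fun s => X s d)) t
      = pder b (pder a (fun s => X s d)) t :=
    pder_comm hU (hX d) a b ht
  have cY (a b d : Fin n) : pder a (pder b (fun s => Y s d)) t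
      = pder b (pder a (fun s => Y s d)) t :=
    pder_comm hU (hY d) a b ht
  have hexp (X : VF n) (h : Met n) (i j) : lieMet X h t i j
      = ∑ b, (X t b * pder b (fun s => h s i j) t + h t b j * pder i (fun s => X s b) t
        + h t i b * pder j (fun s => X s b) t) := by
    simp only [lieMet, Matrix.of_apply, Finset.sum_add_distrib]
  rw [hexp X (lieMet Y g), hexp Y (lieMet X g), hexp (vbr X Y) g]
  simp only [pder_lieMet hU hX hg _ _ _ ht, pder_lieMet hU hY hg _ _ _ ht,
    pder_vbr hU hX hY _ _ ht]
  simp only [hexp X g, hexp Y g, vbr, Finset.mul_sum, Finset.sum_mul, ← Finset.sum_add_distrib]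
  refine sum_sum_eq_of_symm fun a b => ?_
  rw [cX a i b, cX a j b, cX b i a, cX b j a, cY a i b, cY a j b, cY b i a, cY b j a,
    pder_comm hU (hg i j) a b ht]
  ring

theorem lieMet_congr_vector {U : Set (Pt n)} (hU : IsOpen U) {X Y : VF n} (g : Met n)
    (hXY : ∀ s ∈ U, X s = Y s) {t : Pt n} (ht : t ∈ U) (i j : Fin n) :
    lieMet X g t i j = lieMet Y g t i j := by
  have h (a b) : pder a (fun s => X s b) t = pder a (fun s => Y s b) t :=
    pder_congr hU a (fun s hs => by rw [hXY s hs]) ht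
  simp only [lieMet, Matrix.of_apply, h, hXY t ht]

theorem lieMet_congr_metric {U : Set (Pt n)} (hU : IsOpen U) (X : VF n) {g h : Met n}
    (hgh : ∀ s ∈ U, ∀ i j, g s i j = h s i j) {t : Pt n} (ht : t ∈ U) (i j : Fin n) :
    lieMet X g t i j = lieMet X h t i j := by
  have hp (a i j) : pder a (fun s => g s i j) t = pder a (fun s => h s i j) t :=
    pder_congr hU a (fun s hs => hgh s hs i j) ht
  simp only [lieMet, Matrix.of_apply, hp, hgh t ht]

theorem lieMet_smul_metric {X : VF n} {g : Met n} {φ : Pt n → ℝ} {t : Pt n}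
    (hφ : DifferentiableAt ℝ φ t) (hg : ∀ i j, DifferentiableAt ℝ (fun s => g s i j) t)
    (i j : Fin n) :
    lieMet X (fun s => Matrix.of fun i j => φ s * g s i j) t i j
      = lieFun X φ t * g t i j + φ t * lieMet X g t i j := by
  have hp (a) : pder a (fun s => φ s * g s i j) t
      = pder a φ t * g t i j + φ t * pder a (fun s => g s i j) t := pder_mul a hφ (hg i j)
  simp only [lieMet, lieFun, Matrix.of_apply, hp, Finset.sum_mul, mul_add, Finset.mul_sum,
    ← Finset.sum_add_distrib]
  exact Finset.sum_congr rfl fun a _ => by ring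

theorem lieMet_smul_vector {X : VF n} {g : Met n} {φ : Pt n → ℝ} {t : Pt n}
    (hφ : DifferentiableAt ℝ φ t) (hX : ∀ a, DifferentiableAt ℝ (fun s => X s a) t)
    (i j : Fin n) :
    lieMet (fun s a => φ s * X s a) g t i j
      = φ t * lieMet X g t i j + pder i φ t * (∑ a, g t a j * X t a)
        + pder j φ t * ∑ a, g t i a * X t a := by
  have hp (a b) : pder b (fun s => φ s * X s a) t
      = pder b φ t * X t a + φ t * pder b (fun s => X s a) t := pder_mul b hφ (hX a)
  simp only [lieMet, Matrix.of_apply, hp, mul_add, Finset.mul_sum,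
    ← Finset.sum_add_distrib]
  exact Finset.sum_congr rfl fun a _ => by ring

theorem mapp_single_single (c : Mul2 n) (i j : Fin n) (t : Pt n) (a : Fin n) :
    mapp c (fun _ => Pi.single i 1) (fun _ => Pi.single j 1) t a = c t a i j := by
  simp [mapp, Pi.single_apply]

theorem lieMul_apply (E : VF n) (c : Mul2 n) (t : Pt n) (a i j : Fin n) :
    lieMul E c t a i j
      = ∑ b, (E t b * pder b (fun s => c s a i j) t - c t b i j * pder b (fun s => E s a) t
        + c t a b j * pder i (fun s => E s b) t + c t a i b * pder j (fun s => E s b) t) := by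
  have hc : mapp c (fun _ => Pi.single i 1) (fun _ => Pi.single j 1) = fun s a => c s a i j := by
    funext s a
    exact mapp_single_single c i j s a
  have hv (i : Fin n) (m : Fin n) :
      vbr E (fun _ => Pi.single i 1) t m = - pder i (fun s => E s m) t := by
    simp [vbr, pder_const, Pi.single_apply]
  simp only [lieMul, hc]
  simp only [mapp, hv]
  simp only [vbr]
  simp [Pi.single_apply, Finset.sum_add_distrib, Finset.sum_sub_distrib]

/-- The contraction of a 1-form with a multiplication, a symmetric bilinear form. -/
def contr (θ : OneForm n) (c : Mul2 n) : Met n :=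
  fun t => Matrix.of fun i j => ∑ m, θ t m * c t m i j

/-- Leibniz rule for the Lie derivative of the contraction of a 1-form with a multiplication. -/
theorem lieMet_contr {E : VF n} {c : Mul2 n} {θ : OneForm n} {t : Pt n}
    (hθ : ∀ m, DifferentiableAt ℝ (fun s => θ s m) t)
    (hc : ∀ m i j, DifferentiableAt ℝ (fun s => c s m i j) t) (i j : Fin n) :
    lieMet E (contr θ c) t i j
      = (∑ m, lieOne E θ t m * c t m i j) + ∑ m, θ t m * lieMul E c t m i j := by
  have hp (b) : pder b (fun s => ∑ m, θ s m * c s m i j) t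
      = ∑ m, (pder b (fun s => θ s m) t * c t m i j + θ t m * pder b (fun s => c s m i j) t) := by
    rw [pder_sum b (f := fun m s => θ s m * c s m i j) fun m => (hθ m).mul (hc m i j)]
    exact Finset.sum_congr rfl fun m _ => pder_mul b (hθ m) (hc m i j)
  simp only [lieMet, contr, Matrix.of_apply, hp, lieMul_apply, lieOne, add_mul, Finset.mul_sum,
    Finset.sum_mul, ← Finset.sum_add_distrib]
  exact sum_sum_eq_of_symm fun a b => by ring

/-! ### Pointwise algebra -/

/-- The product of two vectors with respect to structure constants. -/
def pmul (C : Fin n → Fin n → Fin n → ℝ) (x y : Fin n → ℝ) : Fin n → ℝ :=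
  fun k => ∑ i, ∑ j, C k i j * x i * y j

theorem mapp_eq_pmul (c : Mul2 n) (X Y : VF n) (t : Pt n) :
    mapp c X Y t = pmul (c t) (X t) (Y t) := rfl

theorem pmul_comm {C : Fin n → Fin n → Fin n → ℝ} (hC : ∀ a i j, C a i j = C a j i)
    (x y : Fin n → ℝ) : pmul C x y = pmul C y x := by
  funext a
  simp only [pmul]
  rw [Finset.sum_comm]
  exact Finset.sum_congr rfl fun i _ => Finset.sum_congr rfl fun j _ => by rw [hC]; ring

theorem sum_comm_rotate (f : Fin n → Fin n → Fin n → ℝ) :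
    ∑ m, ∑ i, ∑ j, f m i j = ∑ i, ∑ j, ∑ m, f m i j :=
  Finset.sum_comm.trans (Finset.sum_congr rfl fun _ _ => Finset.sum_comm)

theorem pmul_assoc {C : Fin n → Fin n → Fin n → ℝ}
    (hC : ∀ a x y z, (∑ m, C a m z * C m x y) = ∑ m, C a x m * C m y z)
    (x y z : Fin n → ℝ) : pmul C (pmul C x y) z = pmul C x (pmul C y z) := by
  funext a
  have h1 : pmul C (pmul C x y) z a
      = ∑ i, ∑ j, ∑ l, (∑ m, C a m l * C m i j) * (x i * y j * z l) := by
    simp only [pmul, Finset.sum_mul, Finset.mul_sum]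
    refine Finset.sum_comm.trans (Eq.trans ?_ (sum_comm_rotate _))
    refine Finset.sum_congr rfl fun l _ => ?_
    rw [sum_comm_rotate]
    exact Finset.sum_congr rfl fun i _ => Finset.sum_congr rfl fun j _ =>
      Finset.sum_congr rfl fun m _ => by ring
  have h2 : pmul C x (pmul C y z) a
      = ∑ i, ∑ j, ∑ l, (∑ m, C a i m * C m j l) * (x i * y j * z l) := by
    simp only [pmul, Finset.sum_mul, Finset.mul_sum]
    refine Finset.sum_congr rfl fun i _ => ?_
    rw [sum_comm_rotate]
    exact Finset.sum_congr rfl fun j _ => Finset.sum_congr rfl fun l _ =>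
      Finset.sum_congr rfl fun m _ => by ring
  rw [h1, h2]
  simp only [hC]

theorem one_pmul {C : Fin n → Fin n → Fin n → ℝ} {u : Fin n → ℝ}
    (hu : ∀ a i, (∑ j, C a j i * u j) = if a = i then (1 : ℝ) else 0) (x : Fin n → ℝ) :
    pmul C u x = x := by
  funext a
  simp only [pmul]
  rw [Finset.sum_comm]
  simp only [← Finset.sum_mul, hu]
  simp

/-- If a commutative, associative multiplication with a nondegenerate trace form `ε` in dimension
at least three satisfies `p(x) ε(y) + p(y) ε(x) = v(x • y)`, then `p = 0`. -/
theorem eq_zero_of_symm_eq_pmul (hn : 3 ≤ n) {C : Fin n → Fin n → Fin n → ℝ}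
    (hcomm : ∀ x y, pmul C x y = pmul C y x)
    (hassoc : ∀ x y z, pmul C (pmul C x y) z = pmul C x (pmul C y z))
    {ε p v : (Fin n → ℝ) →ₗ[ℝ] ℝ}
    (hε : ∀ z, (∀ x, ε (pmul C z x) = 0) → z = 0)
    (hp : ∀ x y, p x * ε y + p y * ε x = v (pmul C x y)) : p = 0 := by
  obtain ⟨z, hz, hz0⟩ : ∃ z ∈ LinearMap.ker (p.prod ε), z ≠ 0 := by
    refine Submodule.exists_mem_ne_zero_of_ne_bot (LinearMap.ker_ne_bot_of_finrank_lt ?_)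
    simp
    omega
  simp only [LinearMap.mem_ker, LinearMap.prod_apply, Function.prod, Prod.mk_eq_zero] at hz
  have hvz (y) : v (pmul C z y) = 0 := by rw [← hp, hz.1, hz.2]; ring
  have hno (y : Fin n → ℝ) (r : ℝ) (hr : r ≠ 0) : ¬ ∀ x, v (pmul C y x) = r * ε x := by
    refine fun h => hz0 (hε z fun x => ?_)
    have h1 := h (pmul C z x)
    rw [hcomm y, hassoc, hvz] at h1
    simpa [hr] using h1.symm
  by_contra hp0
  by_cases hker : ∀ y, ε y = 0 → p y = 0
  · obtain ⟨y, hy⟩ : ∃ y, p y ≠ 0 := by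
      by_contra! h
      exact hp0 (LinearMap.ext h)
    have hεy : ε y ≠ 0 := fun h => hy (hker y h)
    refine hno y (2 * p y) (by simpa using hy) fun x => ?_
    have h1 := hker (x - (ε x / ε y) • y) (by simp [hεy])
    simp only [map_sub, map_smul, smul_eq_mul, sub_eq_zero] at h1
    rw [← hp, h1]
    field_simp
    ring
  · push Not at hker
    obtain ⟨y, hy, hpy⟩ := hker
    refine hno y (p y) hpy fun x => ?_
    rw [← hp, hy]
    ring

/-! ### Weak F-manifolds -/

theorem covV_congr {U : Set (Pt n)} (hU : IsOpen U) (g : Met n) (X : VF n) {Y Z : VF n}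
    (h : ∀ s ∈ U, Y s = Z s) {t : Pt n} (ht : t ∈ U) : covV g X Y t = covV g X Z t := by
  funext k
  have hp (i) : pder i (fun s => Y s k) t = pder i (fun s => Z s k) t :=
    pder_congr hU i (fun s hs => by rw [h s hs]) ht
  simp only [covV, hp, h t ht]

theorem sum_metric_mul_chr {g : Met n} {t : Pt n} (hg : IsUnit (g t)) (i j m : Fin n) :
    ∑ k, g t j k * chr g k i m t
      = 1 / 2 * (pder i (fun s => g s m j) t + pder m (fun s => g s i j) t
        - pder j (fun s => g s i m) t) := by
  set F : Fin n → ℝ := fun l => 1 / 2 * (pder i (fun s => g s m l) t + pder m (fun s => g s i l) t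
    - pder l (fun s => g s i m) t) with hF
  have h1 : (fun k => chr g k i m t) = Matrix.mulVec (g t)⁻¹ F := by
    funext k
    simp only [chr, Matrix.mulVec, dotProduct, hF, Finset.mul_sum]
    exact Finset.sum_congr rfl fun l _ => by ring
  have h2 : Matrix.mulVec (g t) (fun k => chr g k i m t) = F := by
    rw [h1, Matrix.mulVec_mulVec, Matrix.mul_nonsing_inv _ ((Matrix.isUnit_iff_isUnit_det _).1 hg),
      Matrix.one_mulVec]
  exact congrFun h2 j

theorem covV_single (g : Met n) (i : Fin n) (Y : VF n) (t : Pt n) (k : Fin n) :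
    covV g (fun _ => Pi.single i 1) Y t k
      = pder i (fun s => Y s k) t + ∑ m, chr g k i m t * Y t m := by
  simp [covV, Pi.single_apply]

/-- `L_X g` is twice the symmetrization of `g(∇X, ·)`. -/
theorem lieMet_eq_covV {U : Set (Pt n)} (hU : IsOpen U) {g : Met n} (hg : IsMetricOn U g)
    (X : VF n) {t : Pt n} (ht : t ∈ U) (i j : Fin n) :
    lieMet X g t i j = ∑ k, g t j k * covV g (fun _ => Pi.single i 1) X t k
      + ∑ k, g t i k * covV g (fun _ => Pi.single j 1) X t k := by
  have hs (a b) {s} (hs : s ∈ U) : g s a b = g s b a := (hg.2 s hs).1.apply b a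
  have hps (a b d) : pder a (fun s => g s b d) t = pder a (fun s => g s d b) t :=
    pder_congr hU a (fun s h => hs b d h) ht
  have key (i j) : ∑ k, g t j k * covV g (fun _ => Pi.single i 1) X t k
      = ∑ k, (g t j k * pder i (fun s => X s k) t
        + 1 / 2 * (pder i (fun s => g s k j) t + pder k (fun s => g s i j) t
        - pder j (fun s => g s i k) t) * X t k) := by
    simp only [covV_single, ← sum_metric_mul_chr (hg.2 t ht).2, Finset.sum_add_distrib, mul_add,
      Finset.mul_sum, Finset.sum_mul]
    congr 1
    rw [Finset.sum_comm]
    exact Finset.sum_congr rfl fun k _ => Finset.sum_congr rfl fun m _ => by ring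
  rw [key, key]
  simp only [lieMet, Matrix.of_apply, ← Finset.sum_add_distrib]
  refine Finset.sum_congr rfl fun k _ => ?_
  rw [hs k j ht, hps i k j, hps j k i, hps k j i]
  ring

namespace IsWeakF

variable {U : Set (Pt n)} {c : Mul2 n} {g' : Met n} {E e Einv : VF n} {Dt k : Pt n → ℝ}

theorem eq_of_mdown2_eq (hW : IsWeakF U c g' E e Einv Dt k) {t : Pt n} (ht : t ∈ U) {X Y : VF n}
    (h : ∀ j, mdown2 g' X (fun _ => Pi.single j 1) t = mdown2 g' Y (fun _ => Pi.single j 1) t) :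
    X t = Y t := by
  refine Matrix.vecMul_injective_of_isUnit (hW.met.2 t ht).2 (funext fun j => ?_)
  have := h j
  simp only [mdown2, Pi.single_apply, mul_ite, mul_one, mul_zero, Finset.sum_ite_eq',
    Finset.mem_univ, if_true] at this
  simpa only [Matrix.vecMul, dotProduct, mul_comm] using this

theorem pmul_e (hW : IsWeakF U c g' E e Einv Dt k) {t : Pt n} (ht : t ∈ U) (x : Fin n → ℝ) :
    pmul (c t) x (e t) = x := by
  rw [pmul_comm (hW.comm t ht), one_pmul (hW.unit t ht)]

theorem smoothVF_const (x : Fin n → ℝ) : SmoothVF U fun _ => x := fun _ => contDiffOn_const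

/-- `E • ∇_Y e = Y • ∇_E e` for constant `Y`. -/
theorem pmul_E_covV_e (hU : IsOpen U) (hW : IsWeakF U c g' E e Einv Dt k) {t : Pt n} (ht : t ∈ U)
    (x : Fin n → ℝ) :
    pmul (c t) (E t) (covV g' (fun _ => x) e t) = pmul (c t) x (covV g' E e t) := by
  have h := hW.eq_of_mdown2_eq ht fun j =>
    hW.sym_E (fun _ => x) e (fun _ => Pi.single j 1) (smoothVF_const x) hW.smooth_e
      (smoothVF_const _) t ht
  have hx : covV g' E (mapp c (fun _ => x) e) t = covV g' E (fun _ => x) t :=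
    covV_congr hU g' E (fun s hs => hW.pmul_e hs x) ht
  have hE : covV g' (fun _ => x) (mapp c E e) t = covV g' (fun _ => x) E t :=
    covV_congr hU g' _ (fun s hs => hW.pmul_e hs _) ht
  funext a
  have ha := congrFun h a
  simp only [covMul, hx, hE, mapp_eq_pmul, hW.pmul_e ht] at ha
  linarith

/-- `∇_Y e = Y • w` for some vector `w` at each point. -/
theorem exists_covV_e_eq (hU : IsOpen U) (hW : IsWeakF U c g' E e Einv Dt k) {t : Pt n}
    (ht : t ∈ U) : ∃ w : Fin n → ℝ, ∀ x, covV g' (fun _ => x) e t = pmul (c t) x w := by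
  have hcomm := pmul_comm (hW.comm t ht)
  have hassoc := pmul_assoc (hW.assoc t ht)
  have hinv : pmul (c t) (E t) (Einv t) = e t := funext (hW.e_inv t ht)
  refine ⟨pmul (c t) (Einv t) (covV g' E e t), fun x => ?_⟩
  rw [← hassoc, hcomm x, hassoc, ← hW.pmul_E_covV_e hU ht, ← hassoc, hcomm (Einv t), hinv,
    one_pmul (hW.unit t ht)]

/-- `L_e g̃` is the contraction of a 1-form with the multiplication. -/
theorem exists_lieMet_e_eq (hU : IsOpen U) (hW : IsWeakF U c g' E e Einv Dt k) {t : Pt n}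
    (ht : t ∈ U) : ∃ θ : Fin n → ℝ, ∀ i j, lieMet e g' t i j = ∑ m, θ m * c t m i j := by
  obtain ⟨w, hw⟩ := hW.exists_covV_e_eq hU ht
  have hs (a b) : g' t a b = g' t b a := (hW.met.2 t ht).1.apply b a
  have key (i j) : ∑ l, g' t j l * covV g' (fun _ => Pi.single i 1) e t l
      = ∑ m, (∑ a, w a * g' t a m) * c t m i j := by
    have h1 : ∑ l, g' t j l * covV g' (fun _ => Pi.single i 1) e t l
        = ∑ a, w a * ∑ l, g' t l j * c t l a i := by
      simp only [hw, pmul, Pi.single_apply, mul_ite, mul_one, mul_zero, ite_mul, zero_mul,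
        Finset.sum_ite_irrel, Finset.sum_const_zero, Finset.sum_ite_eq', Finset.mem_univ, if_true,
        Finset.mul_sum]
      rw [Finset.sum_comm]
      refine Finset.sum_congr rfl fun a _ => Finset.sum_congr rfl fun l _ => ?_
      rw [hs j l, hW.comm t ht l i a]
      ring
    rw [h1]
    simp only [hW.invar t ht, Finset.mul_sum, Finset.sum_mul]
    rw [Finset.sum_comm]
    exact Finset.sum_congr rfl fun a _ => Finset.sum_congr rfl fun l _ => by ring
  refine ⟨fun m => 2 * ∑ a, w a * g' t a m, fun i j => ?_⟩
  rw [lieMet_eq_covV hU hW.met e ht, key, key, ← Finset.sum_add_distrib]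
  refine Finset.sum_congr rfl fun m _ => ?_
  rw [hW.comm t ht m j i]
  ring

/-- The 1-form whose contraction with the multiplication is `L_e g̃` is `(L_e g̃)(·, e)`. -/
theorem lieMet_e_eq_contr (hU : IsOpen U) (hW : IsWeakF U c g' E e Einv Dt k) {t : Pt n}
    (ht : t ∈ U) (i j : Fin n) :
    lieMet e g' t i j = contr (fun s m => ∑ l, lieMet e g' s m l * e s l) c t i j := by
  obtain ⟨θ, hθ⟩ := hW.exists_lieMet_e_eq hU ht
  have h (m) : ∑ l, lieMet e g' t m l * e t l = θ m := by
    simp only [hθ, Finset.sum_mul]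
    rw [Finset.sum_comm]
    have h1 (a) : ∑ l, θ a * c t a m l * e t l = θ a * if a = m then 1 else 0 := by
      rw [← hW.unit t ht a m, Finset.mul_sum]
      exact Finset.sum_congr rfl fun l _ => by rw [hW.comm t ht a m l]; ring
    simp [h1]
  simp only [contr, Matrix.of_apply, h]
  exact hθ i j

/-- `[E, e] = -k e`. -/
theorem vbr_E_e (hU : IsOpen U) (hW : IsWeakF U c g' E e Einv Dt k) {t : Pt n}
    (ht : t ∈ U) : vbr E e t = fun a => -k t * e t a := by
  have de (a) := SmoothFn.differentiableAt hU (hW.smooth_e a) ht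
  have dc (a i j) := SmoothFn.differentiableAt hU (hW.smooth_c a i j) ht
  have hd (a j b) : ∑ i, (pder b (fun s => c s a i j) t * e t i
      + c t a i j * pder b (fun s => e s i) t) = 0 := by
    have h0 : pder b (fun s => ∑ i, c s a i j * e s i) t = 0 := by
      rw [pder_congr hU b (fun s hs => hW.unit s hs a j) ht, pder_const]
    rw [pder_sum b (f := fun i s => c s a i j * e s i) fun i => (dc a i j).mul (de i)] at h0
    rw [← h0]
    exact Finset.sum_congr rfl fun i _ => (pder_mul b (dc a i j) (de i)).symm
  have hk (a j) : k t * (if a = j then 1 else 0) = - ∑ b, c t a b j * vbr E e t b := by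
    have h1 : ∑ i, lieMul E c t a i j * e t i = k t * (if a = j then 1 else 0) := by
      rw [← hW.unit t ht a j, Finset.mul_sum]
      exact Finset.sum_congr rfl fun i _ => by rw [hW.lie_c t ht]; ring
    have h2 : ∑ b, E t b * ∑ i, (pder b (fun s => c s a i j) t * e t i
      + c t a i j * pder b (fun s => e s i) t) = 0 := by simp [hd]
    have h3 : ∑ b, pder b (fun s => E s a) t * ∑ i, c t b i j * e t i
        = ∑ b, pder j (fun s => E s b) t * ∑ i, c t a i b * e t i := by
      simp only [hW.unit t ht]
      simp
    have h4 : ∑ i, lieMul E c t a i j * e t i + ∑ b, c t a b j * vbr E e t b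
        + ∑ b, pder b (fun s => E s a) t * ∑ i, c t b i j * e t i
        = ∑ b, E t b * ∑ i, (pder b (fun s => c s a i j) t * e t i
          + c t a i j * pder b (fun s => e s i) t)
        + ∑ b, pder j (fun s => E s b) t * ∑ i, c t a i b * e t i := by
      simp only [lieMul_apply, vbr, Finset.mul_sum, Finset.sum_mul, ← Finset.sum_add_distrib]
      exact sum_sum_eq_of_symm fun a b => by ring
    linarith
  have h5 (b) : pmul (c t) (vbr E e t) (e t) b = -k t * e t b := by
    have h6 : ∑ j, (k t * (if b = j then 1 else 0)) * e t j = k t * e t b := by simp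
    rw [neg_mul, ← h6]
    simp only [hk, pmul, neg_mul, Finset.sum_neg_distrib, neg_neg, Finset.sum_mul]
    rw [Finset.sum_comm]
  rw [← hW.pmul_e ht (vbr E e t)]
  exact funext h5

theorem metric_eq_contr (hW : IsWeakF U c g' E e Einv Dt k) {t : Pt n}
    (ht : t ∈ U) (i j : Fin n) :
    g' t i j = ∑ m, (∑ l, g' t l m * e t l) * c t m i j := by
  have h : ∑ l, e t l * ∑ m, g' t m j * c t m l i = g' t i j := by
    simp only [Finset.mul_sum]
    rw [Finset.sum_comm]
    have h1 (m) : ∑ l, e t l * (g' t m j * c t m l i) = g' t m j * if m = i then 1 else 0 := by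
      rw [← hW.unit t ht m i, Finset.mul_sum]
      exact Finset.sum_congr rfl fun l _ => by ring
    simp [h1]
  rw [← h]
  simp only [hW.invar t ht, Finset.mul_sum, Finset.sum_mul]
  rw [Finset.sum_comm]
  exact Finset.sum_congr rfl fun m _ => Finset.sum_congr rfl fun l _ => by ring

/-- `dk ⊗ g̃(e) + g̃(e) ⊗ dk` is the contraction of a 1-form with the multiplication. -/
theorem exists_symm_pder_eq (hU : IsOpen U) (hW : IsWeakF U c g' E e Einv Dt k) {t : Pt n}
    (ht : t ∈ U) : ∃ v : Fin n → ℝ, ∀ i j,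
      pder i k t * (∑ l, g' t l j * e t l) + pder j k t * (∑ l, g' t l i * e t l)
        = ∑ m, v m * c t m i j := by
  have de (a) := SmoothFn.differentiableAt hU (hW.smooth_e a) ht
  have dg (i j) := SmoothFn.differentiableAt hU (hW.met.1 i j) ht
  have dc (a i j) := SmoothFn.differentiableAt hU (hW.smooth_c a i j) ht
  have dk := SmoothFn.differentiableAt hU hW.smooth_k ht
  have dD := SmoothFn.differentiableAt hU hW.smooth_Dt ht
  set θ : OneForm n := fun s m => ∑ l, lieMet e g' s m l * e s l with hθ
  have dθ (m) : DifferentiableAt ℝ (fun s => θ s m) t :=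
    SmoothFn.differentiableAt hU (SmoothFn.sum fun l =>
      SmoothFn.mul (SmoothMet.lieMet hU hW.smooth_e hW.met.1 m l) (hW.smooth_e l)) ht
  have hs (a b) : g' t a b = g' t b a := (hW.met.2 t ht).1.apply b a
  refine ⟨fun m => lieFun e Dt t * (∑ l, g' t l m * e t l) + (Dt t - 2 * k t) * θ t m
    - lieOne E θ t m, fun i j => ?_⟩
  have h1 := lieMet_lieMet_sub hU hW.smooth_E hW.smooth_e hW.met.1 ht i j
  rw [lieMet_congr_metric hU E (fun s hs i j => hW.lieMet_e_eq_contr hU hs i j) ht,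
    lieMet_contr dθ dc,
    lieMet_congr_metric hU e (g := lieMet E g')
      (h := fun s => Matrix.of fun i j => Dt s * g' s i j) (fun s hs i j => hW.lie_g s hs i j) ht,
    lieMet_smul_metric dD dg,
    lieMet_congr_vector hU (X := vbr E e) (Y := fun s a => -k s * e s a) g'
      (fun s hs => hW.vbr_E_e hU hs) ht,
    lieMet_smul_vector (φ := fun s => -k s) dk.neg de] at h1
  have hnk (a) : pder a (fun s => -k s) t = - pder a k t := by
    simp [pder]
  have h2 : ∑ m, θ t m * lieMul E c t m i j = k t * lieMet e g' t i j := by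
    rw [hW.lieMet_e_eq_contr hU ht]
    simp only [contr, Matrix.of_apply, Finset.mul_sum, hW.lie_c t ht]
    exact Finset.sum_congr rfl fun m _ => by ring
  have h3 : ∑ m, θ t m * c t m i j = lieMet e g' t i j := (hW.lieMet_e_eq_contr hU ht i j).symm
  have h4 := hW.metric_eq_contr ht i j
  simp only [sub_mul, add_mul, Finset.sum_sub_distrib, Finset.sum_add_distrib, mul_assoc,
    ← Finset.mul_sum]
  simp only [h3, ← h4]
  rw [h2, hnk, hnk] at h1
  have h5 (i) : ∑ a, g' t i a * e t a = ∑ a, g' t a i * e t a :=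
    Finset.sum_congr rfl fun a _ => by rw [hs i a]
  rw [h5 i] at h1
  linarith

theorem pder_k_eq_zero (hn : 3 ≤ n) (hU : IsOpen U) (hW : IsWeakF U c g' E e Einv Dt k)
    {t : Pt n} (ht : t ∈ U) (i : Fin n) : pder i k t = 0 := by
  obtain ⟨v, hv⟩ := hW.exists_symm_pder_eq hU ht
  let L (w : Fin n → ℝ) : (Fin n → ℝ) →ₗ[ℝ] ℝ := dotProductBilin ℝ ℝ w
  have hL (w x) : L w x = ∑ a, w a * x a := rfl
  have hLmul (w x y) : L w (pmul (c t) x y) = ∑ i, ∑ j, (∑ m, w m * c t m i j) * (x i * y j) := by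
    simp only [hL, pmul, Finset.mul_sum, Finset.sum_mul]
    rw [sum_comm_rotate]
    exact Finset.sum_congr rfl fun i _ => Finset.sum_congr rfl fun j _ =>
      Finset.sum_congr rfl fun m _ => by ring
  have hp : L (fun a => pder a k t) = 0 := by
    refine eq_zero_of_symm_eq_pmul hn (ε := L fun a => ∑ l, g' t l a * e t l) (v := L v)
      (pmul_comm (hW.comm t ht)) (pmul_assoc (hW.assoc t ht)) (fun z hz => ?_) (fun x y => ?_)
    · refine Matrix.vecMul_injective_of_isUnit (hW.met.2 t ht).2 (funext fun j => ?_)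
      have := hz (Pi.single j 1)
      simp only [hLmul, ← hW.metric_eq_contr ht] at this
      simpa [Matrix.vecMul, dotProduct, Pi.single_apply, mul_comm] using this
    · rw [hLmul, hL, hL, hL, hL, Finset.sum_mul_sum, Finset.sum_mul_sum,
        Finset.sum_comm (f := fun i j => pder i k t * y i * _)]
      simp only [← Finset.sum_add_distrib, ← hv]
      exact Finset.sum_congr rfl fun i _ => Finset.sum_congr rfl fun j _ => by ring
  have := congrArg (fun f => f (Pi.single i 1)) hp
  simpa [hL, Pi.single_apply] using this

end IsWeakF

/-- On a connected weak F-manifold of dimension at least three, the Euler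
vector field rescales the multiplication • by a constant. -/
theorem stmt1 {n : ℕ} (hn : 3 ≤ n) (U : Set (Pt n)) (hUopen : IsOpen U)
    (hUconn : IsConnected U)
    (c : Mul2 n) (g' : Met n) (E e Einv : VF n) (Dt k : Pt n → ℝ)
    (hW : IsWeakF U c g' E e Einv Dt k) :
    ∃ c₀ : ℝ, ∀ t ∈ U, k t = c₀ := by
  refine hUopen.exists_is_const_of_fderiv_eq_zero hUconn.isPreconnected
    (fun t ht => (SmoothFn.differentiableAt hUopen hW.smooth_k ht).differentiableWithinAt)
    fun t ht => ?_
  refine ContinuousLinearMap.coe_injective (LinearMap.pi_ext' fun i => LinearMap.ext_ring ?_)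
  exact hW.pder_k_eq_zero hn hUopen ht i
end
end

section
/- Let (U, •, h̃, E) be a weak F-manifold, where U is a nonempty connected open subset of ℝ^n with n ≥ 3. Define the metric h on U by requiring h*(h̃(X)) = E•X for every vector field X (assume the resulting matrix h⁻¹ is symmetric and invertible at every point, so that h is a metric). Then (h, h̃) together with the Euler vector field E is a weak quasi-homogeneous pencil; in particular (h, h̃) is a compatible pair of metrics. -/
open scoped BigOperators

noncomputable section

variable {n : ℕ}

namespace WeakF

open Matrix

variable {U : Set (Pt n)} {t : Pt n}

/-! ### Calculus of partial derivatives -/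

theorem pder_congr {f g : Pt n → ℝ} (hU : IsOpen U) (h : ∀ s ∈ U, f s = g s) (ht : t ∈ U)
    (i : Fin n) : pder i f t = pder i g t := by
  have : f =ᶠ[nhds t] g := Filter.eventuallyEq_of_mem (hU.mem_nhds ht) h
  simp only [pder, this.fderiv_eq]

theorem diffAt {f : Pt n → ℝ} (hU : IsOpen U) (hf : ContDiffOn ℝ (⊤ : ℕ∞) f U) (ht : t ∈ U) :
    DifferentiableAt ℝ f t :=
  (hf.contDiffAt (hU.mem_nhds ht)).differentiableAt (by simp)

theorem pder_const (i : Fin n) (a : ℝ) : pder i (fun _ => a) t = 0 := by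
  simp [pder]

theorem pder_add {f g : Pt n → ℝ} (hf : DifferentiableAt ℝ f t) (hg : DifferentiableAt ℝ g t)
    (i : Fin n) : pder i (fun s => f s + g s) t = pder i f t + pder i g t := by
  simp [pder, fderiv_fun_add hf hg]

theorem pder_sub {f g : Pt n → ℝ} (hf : DifferentiableAt ℝ f t) (hg : DifferentiableAt ℝ g t)
    (i : Fin n) : pder i (fun s => f s - g s) t = pder i f t - pder i g t := by
  simp [pder, fderiv_fun_sub hf hg]

theorem pder_mul {f g : Pt n → ℝ} (hf : DifferentiableAt ℝ f t) (hg : DifferentiableAt ℝ g t)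
    (i : Fin n) : pder i (fun s => f s * g s) t = pder i f t * g t + f t * pder i g t := by
  simp [pder, fderiv_fun_mul hf hg]
  ring

theorem pder_sum {ι : Type*} (S : Finset ι) {f : ι → Pt n → ℝ}
    (hf : ∀ a ∈ S, DifferentiableAt ℝ (f a) t) (i : Fin n) :
    pder i (fun s => ∑ a ∈ S, f a s) t = ∑ a ∈ S, pder i (f a) t := by
  simp [pder, fderiv_fun_sum hf]

theorem smooth_pder {f : Pt n → ℝ} (hU : IsOpen U) (hf : ContDiffOn ℝ (⊤ : ℕ∞) f U) (i : Fin n) :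
    ContDiffOn ℝ (⊤ : ℕ∞) (fun s => pder i f s) U := by
  have := hf.fderiv_of_isOpen (m := (⊤ : ℕ∞)) hU (by simp)
  exact this.clm_apply contDiffOn_const

theorem pder_comm {f : Pt n → ℝ} (hU : IsOpen U) (hf : ContDiffOn ℝ (⊤ : ℕ∞) f U) (ht : t ∈ U)
    (i j : Fin n) :
    pder i (fun s => pder j f s) t = pder j (fun s => pder i f s) t := by
  have hc := hf.contDiffAt (hU.mem_nhds ht)
  have hd : DifferentiableAt ℝ (fderiv ℝ f) t :=
    (hc.fderiv_right (m := 1) (by norm_cast)).differentiableAt (by simp)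
  have key : ∀ a b : Fin n, pder a (fun s => pder b f s) t
      = fderiv ℝ (fderiv ℝ f) t (Pi.single a 1) (Pi.single b 1) := by
    intro a b
    simp only [pder]
    rw [fderiv_clm_apply hd (differentiableAt_const _)]
    simp
  rw [key, key]
  exact (hc.isSymmSndFDerivAt
    (by simpa using WithTop.coe_le_coe.2 (OrderTop.le_top (2 : ℕ∞)))).eq _ _

/-! ### Matrix-valued functions -/

/-- The entrywise partial derivative of a matrix-valued function. -/
def dM (i : Fin n) (X : Met n) : Met n := fun t => Matrix.of fun a b => pder i (fun s => X s a b) t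

/-- The entrywise derivative of a matrix-valued function along a vector field. -/
def dirM (E : VF n) (X : Met n) : Met n := fun t => ∑ a, E t a • dM a X t

theorem _root_.SmoothMet.add {X Y : Met n} (hX : SmoothMet U X) (hY : SmoothMet U Y) :
    SmoothMet U (fun s => X s + Y s) := fun i j => (hX i j).add (hY i j)

theorem _root_.SmoothMet.sub {X Y : Met n} (hX : SmoothMet U X) (hY : SmoothMet U Y) :
    SmoothMet U (fun s => X s - Y s) := fun i j => (hX i j).sub (hY i j)

theorem _root_.SmoothMet.mul {X Y : Met n} (hX : SmoothMet U X) (hY : SmoothMet U Y) :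
    SmoothMet U (fun s => X s * Y s) := fun i j => by
  simp only [Matrix.mul_apply]
  exact ContDiffOn.sum fun l _ => (hX i l).mul (hY l j)

theorem _root_.SmoothMet.transpose {X : Met n} (hX : SmoothMet U X) :
    SmoothMet U (fun s => (X s)ᵀ) := fun i j => hX j i

theorem _root_.SmoothMet.smul {f : Pt n → ℝ} {X : Met n} (hf : ContDiffOn ℝ (⊤ : ℕ∞) f U)
    (hX : SmoothMet U X) : SmoothMet U (fun s => f s • X s) := fun i j => by
  simp only [Matrix.smul_apply, smul_eq_mul]
  exact hf.mul (hX i j)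

theorem _root_.SmoothMet.const (C : Matrix (Fin n) (Fin n) ℝ) : SmoothMet U (fun _ => C) :=
  fun _ _ => contDiffOn_const

theorem _root_.SmoothMet.sum {X : Fin n → Met n} (hX : ∀ a, SmoothMet U (X a)) :
    SmoothMet U (fun s => ∑ a, X a s) := fun i j => by
  simp only [Matrix.sum_apply]
  exact ContDiffOn.sum fun l _ => hX l i j

theorem _root_.SmoothMet.partial_deriv {X : Met n} (hU : IsOpen U) (hX : SmoothMet U X)
    (i : Fin n) : SmoothMet U (dM i X) := fun a b => smooth_pder hU (hX a b) i

theorem _root_.SmoothMet.det {X : Met n} (hX : SmoothMet U X) :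
    ContDiffOn ℝ (⊤ : ℕ∞) (fun s => (X s).det) U := by
  simp only [Matrix.det_apply]
  exact ContDiffOn.sum fun σ _ => (contDiffOn_prod fun i _ => hX _ _).const_smul _

theorem _root_.SmoothMet.inv {X : Met n} (hX : SmoothMet U X) (hu : ∀ s ∈ U, IsUnit (X s)) :
    SmoothMet U (fun s => (X s)⁻¹) := fun i j => by
  have h1 : ContDiffOn ℝ (⊤ : ℕ∞) (fun s => ((X s).det)⁻¹) U :=
    hX.det.inv fun s hs => ((Matrix.isUnit_iff_isUnit_det _).1 (hu s hs)).ne_zero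
  have h2 : ContDiffOn ℝ (⊤ : ℕ∞) (fun s => (X s).adjugate i j) U := by
    simp only [Matrix.adjugate_apply]
    refine SmoothMet.det (X := fun s => (X s).updateRow j (Pi.single i 1)) fun a b => ?_
    by_cases hab : a = j
    · subst hab
      simpa using contDiffOn_const
    · simpa [Matrix.updateRow_ne hab] using hX a b
  simpa [Matrix.inv_def] using h1.mul h2

theorem dM_congr {X Y : Met n} (hU : IsOpen U) (h : ∀ s ∈ U, X s = Y s) (ht : t ∈ U)
    (i : Fin n) : dM i X t = dM i Y t := by
  ext a b
  exact pder_congr hU (fun s hs => by rw [h s hs]) ht i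

theorem dM_add {X Y : Met n} (hU : IsOpen U) (hX : SmoothMet U X) (hY : SmoothMet U Y)
    (ht : t ∈ U) (i : Fin n) : dM i (fun s => X s + Y s) t = dM i X t + dM i Y t := by
  ext a b
  exact pder_add (diffAt hU (hX a b) ht) (diffAt hU (hY a b) ht) i

theorem dM_sub {X Y : Met n} (hU : IsOpen U) (hX : SmoothMet U X) (hY : SmoothMet U Y)
    (ht : t ∈ U) (i : Fin n) : dM i (fun s => X s - Y s) t = dM i X t - dM i Y t := by
  ext a b
  exact pder_sub (diffAt hU (hX a b) ht) (diffAt hU (hY a b) ht) i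

theorem dM_mul {X Y : Met n} (hU : IsOpen U) (hX : SmoothMet U X) (hY : SmoothMet U Y)
    (ht : t ∈ U) (i : Fin n) :
    dM i (fun s => X s * Y s) t = dM i X t * Y t + X t * dM i Y t := by
  ext a b
  simp only [dM, Matrix.of_apply, Matrix.add_apply, Matrix.mul_apply]
  rw [← Finset.sum_add_distrib]
  refine (pder_sum _ (fun l _ => (diffAt hU (hX a l) ht).mul (diffAt hU (hY l b) ht)) i).trans ?_
  exact Finset.sum_congr rfl fun l _ => pder_mul (diffAt hU (hX a l) ht) (diffAt hU (hY l b) ht) i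

theorem dM_smul {f : Pt n → ℝ} {X : Met n} (hU : IsOpen U) (hf : ContDiffOn ℝ (⊤ : ℕ∞) f U)
    (hX : SmoothMet U X) (ht : t ∈ U) (i : Fin n) :
    dM i (fun s => f s • X s) t = pder i f t • X t + f t • dM i X t := by
  ext a b
  exact pder_mul (diffAt hU hf ht) (diffAt hU (hX a b) ht) i

theorem dM_sum {X : Fin n → Met n} (hU : IsOpen U) (hX : ∀ a, SmoothMet U (X a))
    (ht : t ∈ U) (i : Fin n) : dM i (fun s => ∑ a, X a s) t = ∑ a, dM i (X a) t := by
  ext a b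
  simp only [dM, Matrix.of_apply, Matrix.sum_apply]
  exact pder_sum _ (fun l _ => diffAt hU (hX l a b) ht) i

theorem dM_const (C : Matrix (Fin n) (Fin n) ℝ) (i : Fin n) : dM i (fun _ => C) t = 0 := by
  ext a b
  exact pder_const i _

theorem dM_transpose (X : Met n) (i : Fin n) : dM i (fun s => (X s)ᵀ) t = (dM i X t)ᵀ := rfl

theorem dM_comm {X : Met n} (hU : IsOpen U) (hX : SmoothMet U X) (ht : t ∈ U) (i j : Fin n) :
    dM i (dM j X) t = dM j (dM i X) t := by
  ext a b
  exact pder_comm hU (hX a b) ht i j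

theorem dirM_congr {X Y : Met n} (hU : IsOpen U) (h : ∀ s ∈ U, X s = Y s) (ht : t ∈ U)
    (E : VF n) : dirM E X t = dirM E Y t := by
  simp only [dirM, dM_congr hU h ht]

theorem dirM_sub {X Y : Met n} (hU : IsOpen U) (hX : SmoothMet U X) (hY : SmoothMet U Y)
    (ht : t ∈ U) (E : VF n) : dirM E (fun s => X s - Y s) t = dirM E X t - dirM E Y t := by
  simp only [dirM, dM_sub hU hX hY ht, smul_sub, Finset.sum_sub_distrib]

theorem dirM_add {X Y : Met n} (hU : IsOpen U) (hX : SmoothMet U X) (hY : SmoothMet U Y)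
    (ht : t ∈ U) (E : VF n) : dirM E (fun s => X s + Y s) t = dirM E X t + dirM E Y t := by
  simp only [dirM, dM_add hU hX hY ht, smul_add, Finset.sum_add_distrib]

theorem dirM_mul {X Y : Met n} (hU : IsOpen U) (hX : SmoothMet U X) (hY : SmoothMet U Y)
    (ht : t ∈ U) (E : VF n) :
    dirM E (fun s => X s * Y s) t = dirM E X t * Y t + X t * dirM E Y t := by
  simp only [dirM, dM_mul hU hX hY ht, smul_add, Finset.sum_add_distrib, Finset.sum_mul,
    Finset.mul_sum, smul_mul_assoc, mul_smul_comm]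

theorem dirM_const (C : Matrix (Fin n) (Fin n) ℝ) (E : VF n) : dirM E (fun _ => C) t = 0 := by
  simp [dirM, dM_const]

theorem dirM_transpose (X : Met n) (E : VF n) :
    dirM E (fun s => (X s)ᵀ) t = (dirM E X t)ᵀ := by
  simp [dirM, dM_transpose, Matrix.transpose_sum]

theorem dirM_smul {f : Pt n → ℝ} {X : Met n} (hU : IsOpen U) (hf : ContDiffOn ℝ (⊤ : ℕ∞) f U)
    (hX : SmoothMet U X) (ht : t ∈ U) (E : VF n) :
    dirM E (fun s => f s • X s) t = lieFun E f t • X t + f t • dirM E X t := by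
  simp only [dirM, lieFun, dM_smul hU hf hX ht, smul_add, Finset.sum_add_distrib, Finset.sum_smul,
    Finset.smul_sum, smul_smul, mul_comm (f t)]

theorem dirM_sum {X : Fin n → Met n} (hU : IsOpen U) (hX : ∀ a, SmoothMet U (X a))
    (ht : t ∈ U) (E : VF n) : dirM E (fun s => ∑ a, X a s) t = ∑ a, dirM E (X a) t := by
  simp only [dirM, dM_sum hU hX ht, Finset.smul_sum]
  exact Finset.sum_comm

/-- The Jacobian matrix of a vector field. -/
def jac (E : VF n) : Met n := fun t => Matrix.of fun k j => pder j (fun s => E s k) t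

theorem smooth_jac (hU : IsOpen U) {E : VF n} (hE : SmoothVF U E) : SmoothMet U (jac E) :=
  fun k j => smooth_pder hU (hE k) j

theorem dM_dirM {X : Met n} (hU : IsOpen U) {E : VF n} (hE : SmoothVF U E) (hX : SmoothMet U X)
    (ht : t ∈ U) (i : Fin n) :
    dM i (dirM E X) t = dirM E (dM i X) t + ∑ a, jac E t a i • dM a X t := by
  have : dM i (dirM E X) t = ∑ a, dM i (fun s => E s a • dM a X s) t :=
    dM_sum hU (fun a => (hX.partial_deriv hU a).smul (hE a)) ht i
  rw [this]
  simp only [dM_smul hU (hE _) (hX.partial_deriv hU _) ht, dM_comm hU hX ht i,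
    Finset.sum_add_distrib]
  rw [add_comm]
  rfl

/-! ### Levi-Civita connections -/

/-- The matrix of the connection form of `g` in the `i`-th coordinate direction. -/
def gam (g : Met n) (i : Fin n) : Met n := fun t => Matrix.of fun k m => chr g k i m t

theorem smooth_gam (hU : IsOpen U) {g : Met n} (hg : IsMetricOn U g) (i : Fin n) :
    SmoothMet U (gam g i) := fun k m => by
  simp only [gam, chr, Matrix.of_apply]
  refine contDiffOn_const.mul (ContDiffOn.sum fun l _ => ?_)
  exact (SmoothMet.inv hg.1 (fun s hs => (hg.2 s hs).2) k l).mul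
    (((smooth_pder hU (hg.1 _ _) _).add (smooth_pder hU (hg.1 _ _) _)).sub
      (smooth_pder hU (hg.1 _ _) _))

theorem pder_metric_symm (hU : IsOpen U) {g : Met n} (hg : IsMetricOn U g) (ht : t ∈ U)
    (i a b : Fin n) : pder i (fun s => g s a b) t = pder i (fun s => g s b a) t :=
  pder_congr hU (fun s hs => ((hg.2 s hs).1.apply a b).symm) ht i

theorem gam_symm (hU : IsOpen U) {g : Met n} (hg : IsMetricOn U g) (ht : t ∈ U)
    (i j k : Fin n) : gam g i t k j = gam g j t k i := by
  simp only [gam, chr, Matrix.of_apply]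
  congr 1
  refine Finset.sum_congr rfl fun l _ => ?_
  rw [pder_metric_symm hU hg ht l i j]
  ring

/-- A family of matrices which is torsion-free and has prescribed symmetric parts with respect
to a symmetric invertible matrix is given by the Koszul formula. -/
theorem koszul {G : Matrix (Fin n) (Fin n) ℝ} (hG : G.IsSymm) (hu : IsUnit G)
    {X Y : Fin n → Matrix (Fin n) (Fin n) ℝ} (hX : ∀ i j k, X i k j = X j k i)
    (hY : ∀ i, (X i)ᵀ * G + G * X i = Y i) (i k j : Fin n) :
    X i k j = (1/2) * ∑ l, G⁻¹ k l * (Y i j l + Y j i l - Y l i j) := by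
  have hZ : ∀ i a b, (G * X i) a b = (G * X b) a i := fun i a b => by
    simp only [Matrix.mul_apply, hX i b]
  have hYZ : ∀ i a b, Y i a b = (G * X i) b a + (G * X i) a b := fun i a b => by
    rw [← hY, Matrix.add_apply, ← Matrix.transpose_apply (G * X i) a b, Matrix.transpose_mul, hG.eq]
  have hsum : ∀ l, Y i j l + Y j i l - Y l i j = 2 * (G * X i) l j := fun l => by
    rw [hYZ, hYZ, hYZ, hZ i j l, hZ j i l, hZ j l i]
    ring
  have hinv : G⁻¹ * (G * X i) = X i := by
    rw [← Matrix.mul_assoc, Matrix.nonsing_inv_mul _ ((Matrix.isUnit_iff_isUnit_det _).1 hu),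
      Matrix.one_mul]
  conv_lhs => rw [← hinv, Matrix.mul_apply]
  simp only [hsum, Finset.mul_sum]
  exact Finset.sum_congr rfl fun l _ => by ring

theorem dM_metric (hU : IsOpen U) {g : Met n} (hg : IsMetricOn U g) (ht : t ∈ U) (i : Fin n) :
    dM i g t = (gam g i t)ᵀ * g t + g t * gam g i t := by
  obtain ⟨hs, hu⟩ := hg.2 t ht
  have key : ∀ a b, (g t * gam g i t) a b = (1/2) * (pder i (fun s => g s b a) t
      + pder b (fun s => g s i a) t - pder a (fun s => g s i b) t) := fun a b => by
    set v : Fin n → ℝ := fun l => (1/2) * (pder i (fun s => g s b l) t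
      + pder b (fun s => g s i l) t - pder l (fun s => g s i b) t) with hv
    have h1 : (g t * gam g i t) a b = (g t *ᵥ ((g t)⁻¹ *ᵥ v)) a := by
      simp only [Matrix.mul_apply, gam, chr, Matrix.mulVec, dotProduct, Matrix.of_apply, hv]
      refine Finset.sum_congr rfl fun l _ => ?_
      congr 1
      rw [Finset.mul_sum]
      exact Finset.sum_congr rfl fun m _ => by ring
    rw [h1, Matrix.mulVec_mulVec, Matrix.mul_nonsing_inv _ ((Matrix.isUnit_iff_isUnit_det _).1 hu),
      Matrix.one_mulVec]
  ext a b
  have h2 : ((gam g i t)ᵀ * g t) a b = (g t * gam g i t) b a := by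
    rw [← Matrix.transpose_apply (g t * gam g i t), Matrix.transpose_mul, hs.eq]
  rw [Matrix.add_apply, h2, key, key]
  simp only [dM, Matrix.of_apply]
  rw [pder_metric_symm hU hg ht i b a]
  ring

theorem gam_unique {g : Met n} (hg : IsMetricOn U g) (ht : t ∈ U)
    {X : Fin n → Matrix (Fin n) (Fin n) ℝ} (hX : ∀ i j k, X i k j = X j k i)
    (hY : ∀ i, (X i)ᵀ * g t + g t * X i = dM i g t) (i : Fin n) : gam g i t = X i := by
  ext k j
  rw [koszul (hg.2 t ht).1 (hg.2 t ht).2 hX hY]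
  rfl

/-- The Lie derivative of the connection form. -/
def lieGam (g : Met n) (E : VF n) (i : Fin n) : Met n := fun t =>
  dirM E (gam g i) t - jac E t * gam g i t + gam g i t * jac E t
    + ∑ a, jac E t a i • gam g a t + dM i (jac E) t

theorem lieGam_symm (hU : IsOpen U) {g : Met n} (hg : IsMetricOn U g) {E : VF n}
    (hE : SmoothVF U E) (ht : t ∈ U) (i j k : Fin n) :
    lieGam g E i t k j = lieGam g E j t k i := by
  have h1 : dirM E (gam g i) t k j = dirM E (gam g j) t k i := by
    simp only [dirM, Matrix.sum_apply, Matrix.smul_apply, dM, Matrix.of_apply]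
    refine Finset.sum_congr rfl fun a _ => ?_
    rw [pder_congr hU (fun s hs => gam_symm hU hg hs i j k) ht a]
  have h2 : dM i (jac E) t k j = dM j (jac E) t k i := pder_comm hU (hE k) ht i j
  have h3 : ∀ i j, (gam g i t * jac E t) k j = (∑ a, jac E t a j • gam g a t) k i := fun i j => by
    simp only [Matrix.mul_apply, Matrix.sum_apply, Matrix.smul_apply, smul_eq_mul]
    refine Finset.sum_congr rfl fun a _ => ?_
    rw [gam_symm hU hg ht i a k, mul_comm]
  have h4 : (jac E t * gam g i t) k j = (jac E t * gam g j t) k i := by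
    simp only [Matrix.mul_apply]
    exact Finset.sum_congr rfl fun a _ => by rw [gam_symm hU hg ht i j a]
  simp only [lieGam, Matrix.add_apply, Matrix.sub_apply]
  rw [h1, h2, h3, h4, ← h3 j i]
  ring

theorem dM_conformal (hU : IsOpen U) {g : Met n} (hg : IsMetricOn U g) {E : VF n}
    (hE : SmoothVF U E) {φ : Pt n → ℝ} (hφ : ContDiffOn ℝ (⊤ : ℕ∞) φ U)
    (hL : ∀ s ∈ U, dirM E g s + (jac E s)ᵀ * g s + g s * jac E s = φ s • g s) (ht : t ∈ U)
    (i : Fin n) :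
    (lieGam g E i t)ᵀ * g t + g t * lieGam g E i t = pder i φ t • g t := by
  have hJ := smooth_jac hU hE
  have hg1 := hg.1
  have hgam := smooth_gam hU hg i
  have hdir : SmoothMet U (dirM E g) :=
    SmoothMet.sum fun a => (hg1.partial_deriv hU a).smul (hE a)
  have e1 : dM i (fun s => dirM E g s + (jac E s)ᵀ * g s + g s * jac E s) t
      = dM i (fun s => φ s • g s) t := dM_congr hU hL ht i
  rw [dM_add hU (hdir.add (hJ.transpose.mul hg1)) (hg1.mul hJ) ht,
    dM_add hU hdir (hJ.transpose.mul hg1) ht, dM_mul hU hJ.transpose hg1 ht, dM_mul hU hg1 hJ ht,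
    dM_smul hU hφ hg1 ht, dM_dirM hU hE hg1 ht, dM_transpose,
    dirM_congr hU (fun s hs => dM_metric hU hg hs i) ht,
    dirM_add hU (hgam.transpose.mul hg1) (hg1.mul hgam) ht, dirM_mul hU hgam.transpose hg1 ht,
    dirM_mul hU hg1 hgam ht, dirM_transpose] at e1
  have e2 := hL t ht
  have e3 : ∑ a, jac E t a i • dM a g t = (∑ a, jac E t a i • gam g a t)ᵀ * g t
      + g t * ∑ a, jac E t a i • gam g a t := by
    simp only [dM_metric hU hg ht, Matrix.transpose_sum, Matrix.transpose_smul, Finset.sum_mul,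
      Finset.mul_sum, smul_add, Finset.sum_add_distrib, smul_mul_assoc, mul_smul_comm]
  rw [e3, dM_metric hU hg ht] at e1
  simp only [lieGam, Matrix.transpose_add, Matrix.transpose_sub, Matrix.transpose_mul]
  set S := ∑ a, jac E t a i • gam g a t
  have e4 : dirM E g t = φ t • g t - (jac E t)ᵀ * g t - g t * jac E t := by
    rw [← e2]
    abel
  rw [e4] at e1
  have e5 : pder i φ t • g t = (pder i φ t • g t + φ t • ((gam g i t)ᵀ * g t + g t * gam g i t))
    - φ t • ((gam g i t)ᵀ * g t + g t * gam g i t) := by abel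
  rw [e5, ← e1]
  simp only [mul_add, add_mul, mul_sub, sub_mul, Matrix.mul_assoc, smul_mul_assoc, mul_smul_comm,
    smul_add]
  abel

theorem lieGam_conformal (hU : IsOpen U) {g : Met n} (hg : IsMetricOn U g) {E : VF n}
    (hE : SmoothVF U E) {φ : Pt n → ℝ} (hφ : ContDiffOn ℝ (⊤ : ℕ∞) φ U)
    (hL : ∀ s ∈ U, dirM E g s + (jac E s)ᵀ * g s + g s * jac E s = φ s • g s) (ht : t ∈ U)
    (i k j : Fin n) :
    lieGam g E i t k j = (1/2) * (pder i φ t * (1 : Matrix (Fin n) (Fin n) ℝ) k j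
      + pder j φ t * (1 : Matrix (Fin n) (Fin n) ℝ) k i
      - g t i j * ((g t)⁻¹ *ᵥ fun l => pder l φ t) k) := by
  obtain ⟨hs, hu⟩ := hg.2 t ht
  have hinv : (g t)⁻¹ * g t = 1 :=
    Matrix.nonsing_inv_mul _ ((Matrix.isUnit_iff_isUnit_det _).1 hu)
  have h1 : ∀ i k, ∑ l, (g t)⁻¹ k l * g t i l = (1 : Matrix (Fin n) (Fin n) ℝ) k i :=
    fun i k => by
      rw [← hinv, Matrix.mul_apply]
      exact Finset.sum_congr rfl fun l _ => by rw [hs.apply]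
  rw [koszul hs hu (X := fun i => lieGam g E i t) (Y := fun i => pder i φ t • g t)
    (fun i j k => lieGam_symm hU hg hE ht i j k) (dM_conformal hU hg hE hφ hL ht), ← h1, ← h1]
  simp only [Matrix.mulVec, dotProduct, Matrix.smul_apply, smul_eq_mul, Finset.mul_sum,
    ← Finset.sum_add_distrib, ← Finset.sum_sub_distrib]
  exact Finset.sum_congr rfl fun l _ => by ring

/-- The endomorphism `X ↦ ∇_X E`. -/
def covE (g : Met n) (E : VF n) : Met n := fun t => jac E t + ∑ a, E t a • gam g a t

theorem smooth_covE (hU : IsOpen U) {g : Met n} (hg : IsMetricOn U g) {E : VF n}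
    (hE : SmoothVF U E) : SmoothMet U (covE g E) :=
  (smooth_jac hU hE).add (SmoothMet.sum fun a => (smooth_gam hU hg a).smul (hE a))

theorem lie_metric (hU : IsOpen U) {g : Met n} (hg : IsMetricOn U g) (E : VF n) (ht : t ∈ U) :
    dirM E g t + (jac E t)ᵀ * g t + g t * jac E t = (covE g E t)ᵀ * g t + g t * covE g E t := by
  simp only [dirM, dM_metric hU hg ht, covE, Matrix.transpose_add, Matrix.transpose_sum,
    Matrix.transpose_smul, mul_add, add_mul, Finset.mul_sum, Finset.sum_mul, smul_add,
    Finset.sum_add_distrib, smul_mul_assoc, mul_smul_comm]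
  abel

theorem dirM_contract (hU : IsOpen U) {E : VF n} (hE : SmoothVF U E) {X : Fin n → Met n}
    (hX : ∀ a, SmoothMet U (X a)) (ht : t ∈ U) :
    dirM E (fun s => ∑ a, E s a • X a s) t
      = ∑ a, E t a • (dirM E (X a) t + ∑ b, jac E t b a • X b t) := by
  rw [dirM_sum hU (fun a => (hX a).smul (hE a)) ht]
  simp only [dirM_smul hU (hE _) (hX _) ht, smul_add, Finset.sum_add_distrib, lieFun,
    Finset.sum_smul, Finset.smul_sum, smul_smul]
  rw [add_comm]
  congr 1
  rw [Finset.sum_comm]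
  rfl

theorem dirM_covE (hU : IsOpen U) {g : Met n} (hg : IsMetricOn U g) {E : VF n}
    (hE : SmoothVF U E) (ht : t ∈ U) :
    dirM E (covE g E) t = jac E t * covE g E t - covE g E t * jac E t
      + ∑ a, E t a • lieGam g E a t := by
  have h1 : dirM E (covE g E) t
      = dirM E (jac E) t + dirM E (fun s => ∑ a, E s a • gam g a s) t :=
    dirM_add hU (smooth_jac hU hE) (SmoothMet.sum fun a => (smooth_gam hU hg a).smul (hE a)) ht E
  have h2 : dirM E (jac E) t = ∑ a, E t a • dM a (jac E) t := rfl
  rw [h1, dirM_contract hU hE (smooth_gam hU hg) ht, h2]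
  simp only [lieGam, covE, smul_add, smul_sub, Finset.sum_add_distrib, Finset.sum_sub_distrib,
    mul_add, add_mul, Finset.mul_sum, Finset.sum_mul, smul_mul_assoc, mul_smul_comm]
  abel

theorem covV_eq (g : Met n) (X Y : VF n) (t : Pt n) (k : Fin n) :
    covV g X Y t k = ∑ i, X t i * (jac Y t k i + (gam g i t *ᵥ Y t) k) := rfl

theorem covV_const (g : Met n) (X : VF n) (t : Pt n) (j : Fin n) :
    covV g X (fun _ => Pi.single j 1) t = fun k => (∑ a, X t a • gam g a t) k j := by
  ext k
  rw [covV_eq]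
  simp [jac, pder_const, Matrix.sum_apply]

theorem covV_col (g : Met n) (X : VF n) (N : Met n) (t : Pt n) (j k : Fin n) :
    covV g X (fun s k => N s k j) t k = (∑ a, X t a • (dM a N t + gam g a t * N t)) k j := by
  rw [covV_eq]
  simp [jac, dM, Matrix.sum_apply, Matrix.mul_apply, Matrix.mulVec, dotProduct, mul_add]

theorem covE_apply (hU : IsOpen U) {g : Met n} (hg : IsMetricOn U g) (E : VF n)
    (ht : t ∈ U) (k i : Fin n) : covE g E t k i = jac E t k i + (gam g i t *ᵥ E t) k := by
  simp only [covE, Matrix.add_apply, Matrix.sum_apply, Matrix.smul_apply, Matrix.mulVec,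
    dotProduct, smul_eq_mul]
  congr 1
  exact Finset.sum_congr rfl fun a _ => by rw [gam_symm hU hg ht a i k, mul_comm]

/-! ### The multiplication -/

/-- The matrix of multiplication by the `i`-th coordinate field. -/
def basM (c : Mul2 n) (i : Fin n) : Met n := fun t => Matrix.of fun k j => c t k i j

/-- The matrix of multiplication by the vector `x` at the point `t`. -/
def mulE (c : Mul2 n) (t : Pt n) (x : Fin n → ℝ) : Matrix (Fin n) (Fin n) ℝ :=
  ∑ a, x a • basM c a t

theorem mulE_apply (c : Mul2 n) (t : Pt n) (x : Fin n → ℝ) (k j : Fin n) :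
    mulE c t x k j = ∑ a, x a * c t k a j := by
  simp [mulE, basM, Matrix.sum_apply]

theorem mulE_single (c : Mul2 n) (t : Pt n) (i : Fin n) :
    mulE c t (Pi.single i 1) = basM c i t := by
  ext k j
  simp [mulE_apply, basM, Pi.single_apply]

theorem mapp_eq (c : Mul2 n) (X Y : VF n) (t : Pt n) :
    mapp c X Y t = mulE c t (X t) *ᵥ Y t := by
  ext k
  simp only [mapp, Matrix.mulVec, dotProduct, mulE_apply, Finset.sum_mul]
  rw [Finset.sum_comm]
  exact Finset.sum_congr rfl fun i _ => Finset.sum_congr rfl fun j _ => by ring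

variable {c : Mul2 n} {g : Met n} {E e Einv : VF n} {Dt κ : Pt n → ℝ}

theorem mulE_comm (hW : IsWeakF U c g E e Einv Dt κ) (ht : t ∈ U) (x y : Fin n → ℝ) :
    mulE c t x *ᵥ y = mulE c t y *ᵥ x := by
  ext k
  simp only [Matrix.mulVec, dotProduct, mulE_apply, Finset.sum_mul]
  rw [Finset.sum_comm]
  refine Finset.sum_congr rfl fun i _ => Finset.sum_congr rfl fun j _ => ?_
  rw [hW.comm t ht k i j]
  ring

theorem mulE_mul (hW : IsWeakF U c g E e Einv Dt κ) (ht : t ∈ U) (x y : Fin n → ℝ) :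
    mulE c t x * mulE c t y = mulE c t (mulE c t x *ᵥ y) := by
  have h1 : ∀ a b, basM c a t * basM c b t = ∑ m, c t m a b • basM c m t := fun a b => by
    ext k j
    simp only [basM, Matrix.mul_apply, Matrix.sum_apply, Matrix.smul_apply, Matrix.of_apply,
      smul_eq_mul]
    rw [← hW.assoc t ht k a b j]
    exact Finset.sum_congr rfl fun m _ => mul_comm _ _
  have h2 : mulE c t x * mulE c t y
      = ∑ a, ∑ b, ∑ m, (x a * y b * c t m a b) • basM c m t := by
    simp only [mulE, Finset.sum_mul_sum, smul_mul_smul_comm, h1, Finset.smul_sum, smul_smul]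
  have h3 : mulE c t (mulE c t x *ᵥ y)
      = ∑ m, ∑ b, ∑ a, (x a * y b * c t m a b) • basM c m t := by
    rw [mulE]
    simp only [Matrix.mulVec, dotProduct, mulE_apply, Finset.sum_mul, Finset.sum_smul,
      mul_right_comm]
  rw [h2, h3, Finset.sum_comm, Finset.sum_comm (s := Finset.univ)
    (f := fun m b => ∑ a, (x a * y b * c t m a b) • basM c m t)]
  exact Finset.sum_congr rfl fun b _ => Finset.sum_comm

theorem mulE_commute (hW : IsWeakF U c g E e Einv Dt κ) (ht : t ∈ U) (x y : Fin n → ℝ) :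
    mulE c t x * mulE c t y = mulE c t y * mulE c t x := by
  rw [mulE_mul hW ht, mulE_mul hW ht, mulE_comm hW ht]

theorem mulE_adjoint (hW : IsWeakF U c g E e Einv Dt κ) (ht : t ∈ U) (x : Fin n → ℝ) :
    (mulE c t x)ᵀ * g t = g t * mulE c t x := by
  ext a b
  have h1 : ∀ i, ∑ m, g t m b * c t m i a = ∑ m, g t a m * c t m i b := fun i => by
    rw [← hW.invar t ht a i b]
    exact Finset.sum_congr rfl fun m _ => by rw [hW.comm t ht]
  have h2 : ((mulE c t x)ᵀ * g t) a b = ∑ i, x i * ∑ m, g t m b * c t m i a := by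
    simp only [Matrix.mul_apply, Matrix.transpose_apply, mulE_apply, Finset.sum_mul, Finset.mul_sum]
    rw [Finset.sum_comm]
    exact Finset.sum_congr rfl fun i _ => Finset.sum_congr rfl fun j _ => by ring
  have h3 : (g t * mulE c t x) a b = ∑ i, x i * ∑ m, g t a m * c t m i b := by
    simp only [Matrix.mul_apply, mulE_apply, Finset.mul_sum]
    rw [Finset.sum_comm]
    exact Finset.sum_congr rfl fun i _ => Finset.sum_congr rfl fun j _ => by ring
  rw [h2, h3]
  simp only [h1]

theorem smooth_basM (hW : IsWeakF U c g E e Einv Dt κ) (i : Fin n) : SmoothMet U (basM c i) :=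
  fun k j => hW.smooth_c k i j

/-- The operator of multiplication by the Euler field. -/
def mulEuler (c : Mul2 n) (E : VF n) : Met n := fun t => mulE c t (E t)

theorem smooth_mulEuler (hW : IsWeakF U c g E e Einv Dt κ) : SmoothMet U (mulEuler c E) :=
  SmoothMet.sum fun a => (smooth_basM hW a).smul (hW.smooth_E a)

theorem conformal_metric (hW : IsWeakF U c g E e Einv Dt κ) (ht : t ∈ U) :
    dirM E g t + (jac E t)ᵀ * g t + g t * jac E t = Dt t • g t := by
  ext i j
  rw [Matrix.smul_apply, smul_eq_mul, ← hW.lie_g t ht i j]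
  simp only [lieMet, dirM, dM, jac, Matrix.add_apply, Matrix.sum_apply, Matrix.smul_apply,
    Matrix.mul_apply, Matrix.transpose_apply, Matrix.of_apply, smul_eq_mul]
  congr 2
  exact Finset.sum_congr rfl fun m _ => mul_comm _ _

theorem dirM_basM (hW : IsWeakF U c g E e Einv Dt κ) (ht : t ∈ U) (i : Fin n) :
    dirM E (basM c i) t = κ t • basM c i t + jac E t * basM c i t - basM c i t * jac E t
      - ∑ a, jac E t a i • basM c a t := by
  have hbr : ∀ i, vbr E (fun _ => Pi.single i 1) t = fun a => - jac E t a i := fun i => by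
    ext a
    simp [vbr, jac, pder_const, Pi.single_apply]
  ext a j
  have h1 := hW.lie_c t ht a i j
  have h2 : ∀ s b, mapp c (fun _ => Pi.single i 1) (fun _ => Pi.single j 1) s b = c s b i j :=
    fun s b => by
      rw [mapp_eq, mulE_single, Matrix.mulVec_single_one]
      rfl
  simp only [lieMul] at h1
  rw [mapp_eq, mapp_eq, hbr, hbr, mulE_single, Matrix.mulVec_single_one] at h1
  simp only [vbr, h2] at h1
  simp only [dirM, dM, basM, jac, Matrix.mulVec, dotProduct, mulE_apply, Matrix.col_apply,
    Matrix.sum_apply, Matrix.smul_apply, Matrix.add_apply, Matrix.sub_apply, Matrix.mul_apply,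
    Matrix.of_apply, smul_eq_mul, Finset.sum_sub_distrib, neg_mul,
    Finset.sum_neg_distrib, sub_neg_eq_add, mul_comm (c t _ _ _)] at h1 ⊢
  linarith

theorem dM_mulEuler (hU : IsOpen U) (hW : IsWeakF U c g E e Einv Dt κ) (ht : t ∈ U)
    (i : Fin n) :
    dM i (mulEuler c E) t = mulEuler c E t * gam g i t - gam g i t * mulEuler c E t
      + covE g E t * basM c i t - basM c i t * covE g E t + κ t • basM c i t := by
  set ΓE : Matrix (Fin n) (Fin n) ℝ := ∑ a, E t a • gam g a t with hΓE
  have hcol : ∀ (N : Matrix (Fin n) (Fin n) ℝ) (L : Matrix (Fin n) (Fin n) ℝ) k j,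
      (N *ᵥ fun m => L m j) k = (N * L) k j := fun N L k j => rfl
  have hmapp : ∀ i j, mapp c (fun _ => Pi.single i 1) (fun _ => Pi.single j 1)
      = fun s k => basM c i s k j := fun i j => by
    ext s k
    rw [mapp_eq, mulE_single, Matrix.mulVec_single_one]
    rfl
  have hmappE : ∀ j, mapp c E (fun _ => Pi.single j 1) = fun s k => mulEuler c E s k j :=
    fun j => by
      ext s k
      rw [mapp_eq, Matrix.mulVec_single_one]
      rfl
  have hcE : covV g (fun _ => Pi.single i 1) E t = fun k => covE g E t k i := by
    ext k
    rw [covV_eq, covE_apply hU hW.met E ht]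
    simp [Pi.single_apply]
  have h1 : ∀ j k, covMul g c E (fun _ => Pi.single i 1) (fun _ => Pi.single j 1) t k
      = (dirM E (basM c i) t + ΓE * basM c i t - mulE c t (fun k => ΓE k i)
          - basM c i t * ΓE) k j := fun j k => by
    simp only [covMul]
    rw [hmapp, covV_col, mapp_eq, mapp_eq, covV_const, covV_const, ← hΓE, mulE_single, hcol,
      Matrix.mulVec_single_one]
    simp only [smul_add, Finset.sum_add_distrib, ← smul_mul_assoc, ← Finset.sum_mul, ← hΓE]
    rfl
  have h2 : ∀ j k, covMul g c (fun _ => Pi.single i 1) E (fun _ => Pi.single j 1) t k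
      = (dM i (mulEuler c E) t + gam g i t * mulEuler c E t - mulE c t (fun k => covE g E t k i)
          - mulEuler c E t * gam g i t) k j := fun j k => by
    simp only [covMul]
    rw [hmappE, covV_col, mapp_eq, mapp_eq, covV_const, hcE, hcol, Matrix.mulVec_single_one]
    simp only [Pi.single_apply, ite_smul, one_smul, zero_smul, Finset.sum_ite_eq',
      Finset.mem_univ, if_true]
    rfl
  have hsm : ∀ j, SmoothVF U (fun _ => (Pi.single j 1 : Fin n → ℝ)) :=
    fun j k => contDiffOn_const
  have h3 : dirM E (basM c i) t + ΓE * basM c i t - mulE c t (fun k => ΓE k i)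
      - basM c i t * ΓE = dM i (mulEuler c E) t + gam g i t * mulEuler c E t
      - mulE c t (fun k => covE g E t k i) - mulEuler c E t * gam g i t := by
    obtain ⟨hs, hu⟩ := hW.met.2 t ht
    refine hu.mul_left_cancel ?_
    ext l j
    have := hW.sym_E (fun _ => Pi.single i 1) (fun _ => Pi.single j 1) (fun _ => Pi.single l 1)
      (hsm i) (hsm j) (hsm l) t ht
    simp only [covMul4, mdown2, h1, h2] at this
    simpa [Pi.single_apply, Matrix.mul_apply, hs.apply l] using this
  have h4 : mulE c t (fun k => covE g E t k i)
      = ∑ a, jac E t a i • basM c a t + mulE c t (fun k => ΓE k i) := by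
    simp only [mulE, covE, Matrix.add_apply, add_smul, Finset.sum_add_distrib, hΓE]
  rw [dirM_basM hW ht, h4] at h3
  have h5 : covE g E t = jac E t + ΓE := rfl
  rw [h5]
  simp only [add_mul, mul_add]
  linear_combination (norm := abel) -h3

/-! ### Curvature -/

/-- The components of the curvature, as endomorphisms. -/
def riem (g : Met n) (i j : Fin n) : Met n := fun t =>
  dM i (gam g j) t - dM j (gam g i) t + gam g i t * gam g j t - gam g j t * gam g i t

theorem covF_eq (g : Met n) (X : VF n) (α : OneForm n) (t : Pt n) :
    covF g X α t = ∑ i, X t i • ((fun k => pder i (fun s => α s k) t) - (gam g i t)ᵀ *ᵥ α t) := by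
  ext k
  simp [covF, Matrix.mulVec, dotProduct, gam]

theorem curvV_const (hU : IsOpen U) {g : Met n} (hg : IsMetricOn U g) {X Y : VF n}
    (hX : SmoothVF U X) (hY : SmoothVF U Y) (ht : t ∈ U) (k m : Fin n) :
    curvV g X Y (fun _ => Pi.single k 1) t m
      = (∑ i, ∑ j, (X t i * Y t j) • riem g i j t) m k := by
  have hcov : ∀ Y : VF n, covV g Y (fun _ => Pi.single k 1)
      = fun s l => (∑ a, Y s a • gam g a s) l k := fun Y => by
    ext1 s
    exact covV_const g Y s k
  have hdir : ∀ {X Y : VF n}, SmoothVF U X → SmoothVF U Y →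
      ∑ a, X t a • (dM a (fun s => ∑ b, Y s b • gam g b s) t
        + gam g a t * ∑ b, Y t b • gam g b t)
      = ∑ b, lieFun X (fun s => Y s b) t • gam g b t
        + ∑ a, ∑ b, (X t a * Y t b) • (dM a (gam g b) t + gam g a t * gam g b t) := by
    intro X Y hX hY
    simp only [dM_sum hU (fun b => (smooth_gam hU hg b).smul (hY b)) ht,
      dM_smul hU (hY _) (smooth_gam hU hg _) ht, smul_add, Finset.sum_add_distrib, lieFun,
      Finset.smul_sum, Finset.sum_smul, Finset.mul_sum, smul_smul, mul_smul_comm]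
    rw [Finset.sum_comm (f := fun a b => (X t a * pder a (fun s => Y s b) t) • gam g b t)]
    abel
  simp only [curvV]
  rw [hcov, hcov, covV_col, covV_col, hdir hX hY, hdir hY hX, covV_const, ← Matrix.sub_apply]
  have hbr : ∑ a, vbr X Y t a • gam g a t
      = ∑ b, lieFun X (fun s => Y s b) t • gam g b t
        - ∑ b, lieFun Y (fun s => X s b) t • gam g b t := by
    simp only [vbr, lieFun, Finset.sum_sub_distrib, sub_smul]
  have hsw : ∑ a, ∑ b, (Y t a * X t b) • (dM a (gam g b) t + gam g a t * gam g b t)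
      = ∑ a, ∑ b, (X t a * Y t b) • (dM b (gam g a) t + gam g b t * gam g a t) := by
    rw [Finset.sum_comm]
    simp only [mul_comm (Y t _)]
  beta_reduce
  rw [← Matrix.sub_apply, hbr, hsw]
  refine congrFun (congrFun ?_ m) k
  simp only [riem, smul_add, smul_sub, Finset.sum_add_distrib, Finset.sum_sub_distrib]
  abel

theorem curvF_eq (hU : IsOpen U) {g : Met n} (hg : IsMetricOn U g) {X Y : VF n}
    (hX : SmoothVF U X) (hY : SmoothVF U Y) (α : OneForm n) (ht : t ∈ U) :
    curvF g X Y α t = - ((∑ i, ∑ j, (X t i * Y t j) • riem g i j t)ᵀ *ᵥ α t) := by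
  ext k
  simp only [curvF, curvV_const hU hg hX hY ht, Pi.neg_apply, Matrix.mulVec, dotProduct,
    Matrix.transpose_apply]
  congr 1
  exact Finset.sum_congr rfl fun m _ => mul_comm _ _

/-! ### The pencil -/

/-- The metric `h` of the pencil with parameter `lam`, together with the inverse `P` of
`E• + lam`. -/
structure PencilMember (U : Set (Pt n)) (c : Mul2 n) (g : Met n) (E : VF n) (lam : ℝ)
    (h P : Met n) : Prop where
  met : IsMetricOn U h
  smooth_P : SmoothMet U P
  inv_P : ∀ s ∈ U, P s * (mulEuler c E s + lam • 1) = 1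
  eq_mul : ∀ s ∈ U, h s = g s * P s

/-- The endomorphism measuring the difference of the connections of the pencil. -/
def tMat (g : Met n) (E : VF n) (Dt κ : Pt n → ℝ) : Met n := fun t =>
  covE g E t - ((Dt t - κ t) / 2) • 1

theorem smooth_tMat (hU : IsOpen U) (hW : IsWeakF U c g E e Einv Dt κ) :
    SmoothMet U (tMat g E Dt κ) :=
  (smooth_covE hU hW.met hW.smooth_E).sub
    (SmoothMet.smul ((hW.smooth_Dt.sub hW.smooth_k).div_const 2) (SmoothMet.const 1))

variable {lam : ℝ} {h P : Met n}

theorem PencilMember.mul_inv (hp : PencilMember U c g E lam h P) (ht : t ∈ U) :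
    (mulEuler c E t + lam • 1) * P t = 1 := mul_eq_one_comm.1 (hp.inv_P t ht)

theorem PencilMember.commute (hW : IsWeakF U c g E e Einv Dt κ)
    (hp : PencilMember U c g E lam h P) (ht : t ∈ U) (x : Fin n → ℝ) :
    mulE c t x * P t = P t * mulE c t x := by
  have h1 : mulE c t x * (mulEuler c E t + lam • 1) = (mulEuler c E t + lam • 1) * mulE c t x := by
    simp only [mul_add, add_mul, mulEuler, mulE_commute hW ht x, mul_smul_comm, smul_mul_assoc,
      mul_one, one_mul]
  calc mulE c t x * P t
      = P t * ((mulEuler c E t + lam • 1) * mulE c t x) * P t := by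
        rw [← Matrix.mul_assoc, hp.inv_P t ht, Matrix.one_mul]
    _ = P t * mulE c t x * ((mulEuler c E t + lam • 1) * P t) := by
        rw [← h1]
        simp only [Matrix.mul_assoc]
    _ = P t * mulE c t x := by rw [hp.mul_inv ht, Matrix.mul_one]

theorem PencilMember.commute_bas (hW : IsWeakF U c g E e Einv Dt κ)
    (hp : PencilMember U c g E lam h P) (ht : t ∈ U) (i : Fin n) :
    basM c i t * P t = P t * basM c i t := by
  rw [← mulE_single, hp.commute hW ht]

theorem PencilMember.dM_P (hU : IsOpen U) (hW : IsWeakF U c g E e Einv Dt κ)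
    (hp : PencilMember U c g E lam h P) (ht : t ∈ U) (i : Fin n) :
    dM i P t = P t * gam g i t - gam g i t * P t
      - P t * (covE g E t * basM c i t - basM c i t * covE g E t + κ t • basM c i t) * P t := by
  have hA := smooth_mulEuler hW
  have hl : SmoothMet U (fun _ => lam • (1 : Matrix (Fin n) (Fin n) ℝ)) := SmoothMet.const _
  have h1 := dM_congr hU hp.inv_P ht i
  rw [dM_mul hU hp.smooth_P (hA.add hl) ht, dM_add hU hA hl ht, dM_const, dM_const, add_zero,
    dM_mulEuler hU hW ht] at h1
  have h2 : dM i P t = - (P t * (mulEuler c E t * gam g i t - gam g i t * mulEuler c E t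
      + covE g E t * basM c i t - basM c i t * covE g E t + κ t • basM c i t)) * P t := by
    rw [← eq_neg_of_add_eq_zero_left h1, Matrix.mul_assoc, hp.mul_inv ht, Matrix.mul_one]
  have h3 : mulEuler c E t * gam g i t - gam g i t * mulEuler c E t
      = (mulEuler c E t + lam • 1) * gam g i t - gam g i t * (mulEuler c E t + lam • 1) := by
    simp only [add_mul, mul_add, smul_mul_assoc, mul_smul_comm, one_mul, mul_one]
    abel
  rw [h2, h3]
  have h4 := hp.inv_P t ht
  have h5 := hp.mul_inv ht
  set Q := mulEuler c E t + lam • 1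
  have h6 : ∀ Z, P t * (Q * Z) = Z := fun Z => by rw [← Matrix.mul_assoc, h4, Matrix.one_mul]
  simp only [mul_add, add_mul, mul_sub, sub_mul, Matrix.mul_assoc, neg_mul, h5, h6,
    Matrix.mul_one]
  abel

theorem covE_adjoint (hU : IsOpen U) (hW : IsWeakF U c g E e Einv Dt κ) (ht : t ∈ U) :
    (covE g E t)ᵀ * g t = Dt t • g t - g t * covE g E t := by
  rw [← conformal_metric hW ht, lie_metric hU hW.met E ht]
  abel

theorem basM_adjoint (hW : IsWeakF U c g E e Einv Dt κ) (ht : t ∈ U) (i : Fin n) :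
    (basM c i t)ᵀ * g t = g t * basM c i t := by
  rw [← mulE_single, mulE_adjoint hW ht]

theorem PencilMember.adjoint (hW : IsWeakF U c g E e Einv Dt κ)
    (hp : PencilMember U c g E lam h P) (ht : t ∈ U) : (P t)ᵀ * g t = g t * P t := by
  have h1 := (hp.met.2 t ht).1.eq
  rw [hp.eq_mul t ht, Matrix.transpose_mul, (hW.met.2 t ht).1.eq] at h1
  exact h1

theorem PencilMember.gam_eq (hU : IsOpen U) (hW : IsWeakF U c g E e Einv Dt κ)
    (hp : PencilMember U c g E lam h P) (ht : t ∈ U) (i : Fin n) :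
    gam h i t = gam g i t - tMat g E Dt κ t * P t * basM c i t := by
  refine gam_unique hp.met ht (X := fun i => gam g i t - tMat g E Dt κ t * P t * basM c i t)
    (fun i j k => ?_) (fun i => ?_) i
  · simp only [Matrix.sub_apply, gam_symm hU hW.met ht i j k]
    congr 1
    rw [Matrix.mul_apply, Matrix.mul_apply]
    refine Finset.sum_congr rfl fun m _ => ?_
    simp only [basM, Matrix.of_apply, hW.comm t ht m i j]
  · have hM := basM_adjoint hW ht i
    have hP := hp.adjoint hW ht
    have hB := covE_adjoint hU hW ht
    have hc := hp.commute_bas hW ht i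
    rw [dM_congr hU hp.eq_mul ht, dM_mul hU hW.met.1 hp.smooth_P ht, dM_metric hU hW.met ht,
      hp.dM_P hU hW ht, hp.eq_mul t ht]
    simp only [tMat]
    set B := covE g E t
    set M := basM c i t
    set Γ := gam g i t
    have hT : ((B - ((Dt t - κ t) / 2) • 1) * P t * M)ᵀ * g t
        = g t * (P t * M * (((Dt t + κ t) / 2) • 1 - B)) := by
      have h1 : (B - ((Dt t - κ t) / 2) • 1)ᵀ * g t = g t * (((Dt t + κ t) / 2) • 1 - B) := by
        simp only [Matrix.transpose_sub, Matrix.transpose_smul, Matrix.transpose_one, sub_mul,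
          mul_sub, hB, smul_mul_assoc, mul_smul_comm, Matrix.one_mul, Matrix.mul_one]
        module
      rw [Matrix.transpose_mul, Matrix.transpose_mul, Matrix.mul_assoc, Matrix.mul_assoc, h1,
        ← Matrix.mul_assoc (P t)ᵀ, hP, ← Matrix.mul_assoc, ← Matrix.mul_assoc, hM, ← hc]
      simp only [Matrix.mul_assoc]
    rw [Matrix.transpose_sub, sub_mul, ← Matrix.mul_assoc, ← Matrix.mul_assoc, hT]
    simp only [mul_add, add_mul, mul_sub, sub_mul, Matrix.mul_assoc, smul_mul_assoc,
      mul_smul_comm, Matrix.one_mul, Matrix.mul_one, hc]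
    module

/-- The part of the curvature of the pencil which does not depend on the parameter. -/
def curvPart (c : Mul2 n) (g : Met n) (E : VF n) (Dt κ : Pt n → ℝ) (i j : Fin n) : Met n :=
  fun t =>
    (dM j (tMat g E Dt κ) t * basM c i t + tMat g E Dt κ t * dM j (basM c i) t
      + gam g j t * tMat g E Dt κ t * basM c i t - tMat g E Dt κ t * basM c i t * gam g j t)
    - (dM i (tMat g E Dt κ) t * basM c j t + tMat g E Dt κ t * dM i (basM c j) t
      + gam g i t * tMat g E Dt κ t * basM c j t - tMat g E Dt κ t * basM c j t * gam g i t)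

theorem PencilMember.riem_eq (hU : IsOpen U) (hW : IsWeakF U c g E e Einv Dt κ)
    (hp : PencilMember U c g E lam h P) (ht : t ∈ U) (i j : Fin n) :
    riem h i j t * (mulEuler c E t + lam • 1)
      = riem g i j t * (mulEuler c E t + lam • 1) + curvPart c g E Dt κ i j t := by
  have hgam : ∀ j, ∀ s ∈ U, gam h j s = gam g j s - tMat g E Dt κ s * basM c j s * P s :=
    fun j s hs => by
      rw [hp.gam_eq hU hW hs, Matrix.mul_assoc, ← hp.commute_bas hW hs, Matrix.mul_assoc]
  have hT := smooth_tMat hU hW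
  have hd : ∀ i j, dM i (gam h j) t = dM i (gam g j) t
      - ((dM i (tMat g E Dt κ) t * basM c j t + tMat g E Dt κ t * dM i (basM c j) t) * P t
        + tMat g E Dt κ t * basM c j t * dM i P t) := fun i j => by
    have hM := smooth_basM hW j
    rw [dM_congr hU (hgam j) ht,
      dM_sub hU (smooth_gam hU hW.met j) ((hT.mul hM).mul hp.smooth_P) ht,
      dM_mul hU (hT.mul hM) hp.smooth_P ht, dM_mul hU hT hM ht]
  have h4 := hp.inv_P t ht
  simp only [riem, curvPart, hd, hp.dM_P hU hW ht, hgam _ t ht]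
  set Q := mulEuler c E t + lam • 1
  have hc := hp.commute_bas hW ht
  have hc' : ∀ i Z, basM c i t * (P t * Z) = P t * (basM c i t * Z) := fun i Z => by
    rw [← Matrix.mul_assoc, hc, Matrix.mul_assoc]
  have hMM : basM c j t * basM c i t = basM c i t * basM c j t := by
    rw [← mulE_single, ← mulE_single, mulE_commute hW ht]
  have hMM' : ∀ Z, basM c j t * (basM c i t * Z) = basM c i t * (basM c j t * Z) := fun Z => by
    rw [← Matrix.mul_assoc, hMM, Matrix.mul_assoc]
  have hB : covE g E t = tMat g E Dt κ t + ((Dt t - κ t) / 2) • 1 := by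
    simp only [tMat, sub_add_cancel]
  have hPMQ : ∀ i, P t * (basM c i t * Q) = basM c i t := fun i => by
    rw [← hc', h4, Matrix.mul_one]
  have hPMTQ : ∀ i j, P t * (basM c i t * (basM c j t * Q)) = basM c i t * basM c j t :=
    fun i j => by rw [← hc', ← hc', h4, Matrix.mul_one]
  rw [hB]
  set T := tMat g E Dt κ t
  simp only [mul_add, add_mul, mul_sub, sub_mul, Matrix.mul_assoc, smul_mul_assoc,
    mul_smul_comm, Matrix.one_mul, Matrix.mul_one, h4, hc, hc', hMM, hMM', hPMQ, hPMTQ]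
  module

theorem PencilMember.inv_eq (hW : IsWeakF U c g E e Einv Dt κ)
    (hp : PencilMember U c g E lam h P) (ht : t ∈ U) :
    (h t)⁻¹ = (mulEuler c E t + lam • 1) * (g t)⁻¹ := by
  refine Matrix.inv_eq_left_inv ?_
  rw [hp.eq_mul t ht, Matrix.mul_assoc, ← Matrix.mul_assoc (g t)⁻¹,
    Matrix.nonsing_inv_mul _ ((Matrix.isUnit_iff_isUnit_det _).1 (hW.met.2 t ht).2),
    Matrix.one_mul, hp.mul_inv ht]

theorem inv_mul_transpose {g : Met n} (hg : IsMetricOn U g) (ht : t ∈ U)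
    (R : Matrix (Fin n) (Fin n) ℝ) : (g t)⁻¹ * Rᵀ = (R * (g t)⁻¹)ᵀ := by
  rw [Matrix.transpose_mul, Matrix.transpose_nonsing_inv, (hg.2 t ht).1.eq]

theorem mup_eq (g : Met n) (α : OneForm n) (t : Pt n) : mup g α t = (g t)⁻¹ *ᵥ α t := rfl

theorem PencilMember.mup_curvF (hU : IsOpen U) (hW : IsWeakF U c g E e Einv Dt κ)
    (hp : PencilMember U c g E lam h P) {X Y : VF n} (hX : SmoothVF U X) (hY : SmoothVF U Y)
    (α : OneForm n) (ht : t ∈ U) :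
    mup h (curvF h X Y α) t = - ((∑ i, ∑ j, (X t i * Y t j) •
        ((riem g i j t * mulEuler c E t + curvPart c g E Dt κ i j t) * (g t)⁻¹))ᵀ *ᵥ α t)
      + lam • mup g (curvF g X Y α) t := by
  rw [mup_eq, mup_eq, curvF_eq hU hp.met hX hY α ht, curvF_eq hU hW.met hX hY α ht,
    Matrix.mulVec_neg, Matrix.mulVec_neg, Matrix.mulVec_mulVec, Matrix.mulVec_mulVec,
    inv_mul_transpose hp.met ht, inv_mul_transpose hW.met ht, hp.inv_eq hW ht,
    ← Matrix.mul_assoc]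
  simp only [Finset.sum_mul, smul_mul_assoc, hp.riem_eq hU hW ht]
  simp only [mul_add, add_mul, mul_smul_comm, Matrix.mul_one, smul_add, Finset.sum_add_distrib,
    Matrix.transpose_add, Matrix.add_mulVec, smul_mul_assoc, smul_comm _ lam, ← Finset.smul_sum,
    Matrix.transpose_smul, Matrix.smul_mulVec]
  module

theorem PencilMember.mup_covF (hU : IsOpen U) (hW : IsWeakF U c g E e Einv Dt κ)
    (hp : PencilMember U c g E lam h P) (X : VF n) (α : OneForm n) (ht : t ∈ U) :
    mup h (covF h X α) t = ∑ i, X t i •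
        ((mulEuler c E t * (g t)⁻¹) *ᵥ (fun k => pder i (fun s => α s k) t)
          - ((gam g i t * mulEuler c E t - tMat g E Dt κ t * basM c i t) * (g t)⁻¹)ᵀ *ᵥ α t)
      + lam • mup g (covF g X α) t := by
  have hQ : ∀ i, gam h i t * (mulEuler c E t + lam • 1)
      = gam g i t * (mulEuler c E t + lam • 1) - tMat g E Dt κ t * basM c i t := fun i => by
    rw [hp.gam_eq hU hW ht, sub_mul, Matrix.mul_assoc (tMat g E Dt κ t),
      ← hp.commute_bas hW ht i, Matrix.mul_assoc (tMat g E Dt κ t), Matrix.mul_assoc (basM c i t),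
      hp.inv_P t ht, Matrix.mul_one]
  rw [mup_eq, mup_eq, covF_eq, covF_eq]
  simp only [Matrix.mulVec_sum, Matrix.mulVec_smul, Matrix.mulVec_sub, Matrix.mulVec_mulVec,
    inv_mul_transpose hp.met ht, inv_mul_transpose hW.met ht]
  simp only [hp.inv_eq hW ht, ← Matrix.mul_assoc, hQ]
  rw [Finset.smul_sum, ← Finset.sum_add_distrib]
  refine Finset.sum_congr rfl fun i _ => ?_
  simp only [mul_add, add_mul, sub_mul, mul_smul_comm, Matrix.mul_one, Matrix.one_mul,
    Matrix.transpose_add, Matrix.transpose_sub, Matrix.add_mulVec, Matrix.sub_mulVec,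
    smul_mul_assoc, Matrix.transpose_smul, Matrix.smul_mulVec]
  module

theorem PencilMember.of_inv (hW : IsWeakF U c g E e Einv Dt κ) (hh : IsMetricOn U h) {lam : ℝ}
    (hdef : ∀ s ∈ U, (h s)⁻¹ * g s = mulEuler c E s + lam • 1) :
    PencilMember U c g E lam h (fun s => (g s)⁻¹ * h s) where
  met := hh
  smooth_P := (SmoothMet.inv hW.met.1 fun s hs => (hW.met.2 s hs).2).mul hh.1
  inv_P := fun s hs => by
    rw [← hdef s hs, Matrix.mul_assoc, ← Matrix.mul_assoc (h s),
      Matrix.mul_nonsing_inv _ ((Matrix.isUnit_iff_isUnit_det _).1 (hh.2 s hs).2),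
      Matrix.one_mul,
      Matrix.nonsing_inv_mul _ ((Matrix.isUnit_iff_isUnit_det _).1 (hW.met.2 s hs).2)]
  eq_mul := fun s hs => by
    rw [← Matrix.mul_assoc,
      Matrix.mul_nonsing_inv _ ((Matrix.isUnit_iff_isUnit_det _).1 (hW.met.2 s hs).2),
      Matrix.one_mul]

theorem isMetricOn_pencil (hh : IsMetricOn U h) (hg : IsMetricOn U g) {lam : ℝ}
    (hu : ∀ s ∈ U, IsUnit ((h s)⁻¹ + lam • (g s)⁻¹)) : IsMetricOn U (pencil h g lam) := by
  refine ⟨SmoothMet.inv ?_ hu, fun s hs => ⟨?_, ?_⟩⟩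
  · exact (SmoothMet.inv hh.1 fun s hs => (hh.2 s hs).2).add
      (SmoothMet.smul contDiffOn_const (SmoothMet.inv hg.1 fun s hs => (hg.2 s hs).2))
  · simp only [Matrix.IsSymm, pencil, Matrix.transpose_nonsing_inv, Matrix.transpose_add,
      Matrix.transpose_smul, (hh.2 s hs).1.eq, (hg.2 s hs).1.eq]
  · exact (Matrix.isUnit_nonsing_inv_iff).2 (hu s hs)

theorem pencilMember_pencil (hW : IsWeakF U c g E e Einv Dt κ) (hh : IsMetricOn U h)
    (hdef : ∀ s ∈ U, (h s)⁻¹ * g s = mulEuler c E s) {lam : ℝ}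
    (hu : ∀ s ∈ U, IsUnit ((h s)⁻¹ + lam • (g s)⁻¹)) :
    PencilMember U c g E lam (pencil h g lam) (fun s => (g s)⁻¹ * pencil h g lam s) := by
  refine PencilMember.of_inv hW (isMetricOn_pencil hh hW.met hu) fun s hs => ?_
  rw [pencil, Matrix.nonsing_inv_nonsing_inv _ ((Matrix.isUnit_iff_isUnit_det _).1 (hu s hs)),
    add_mul, hdef s hs, smul_mul_assoc,
    Matrix.nonsing_inv_mul _ ((Matrix.isUnit_iff_isUnit_det _).1 (hW.met.2 s hs).2)]

theorem compatible_of_isWeakF (hU : IsOpen U) (hW : IsWeakF U c g E e Einv Dt κ)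
    (hh : IsMetricOn U h) (hdef : ∀ s ∈ U, (h s)⁻¹ * g s = mulEuler c E s) :
    Compatible U h g := by
  have h0 : PencilMember U c g E 0 h (fun s => (g s)⁻¹ * h s) :=
    PencilMember.of_inv hW hh fun s hs => by rw [hdef s hs, zero_smul, add_zero]
  refine ⟨fun lam hu X _ α _ t ht k => ?_, fun lam hu X Y hX hY α _ t ht k => ?_⟩
  · have hl := pencilMember_pencil hW hh hdef hu
    rw [hl.mup_covF hU hW X α ht, h0.mup_covF hU hW X α ht, zero_smul, add_zero]
    rfl
  · have hl := pencilMember_pencil hW hh hdef hu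
    rw [hl.mup_curvF hU hW hX hY α ht, h0.mup_curvF hU hW hX hY α ht, zero_smul, add_zero]
    rfl

theorem PencilMember.covE_eq (hU : IsOpen U) (hW : IsWeakF U c g E e Einv Dt κ)
    (hp : PencilMember U c g E 0 h P) (ht : t ∈ U) :
    covE h E t = ((Dt t - κ t) / 2) • 1 := by
  ext k i
  have h1 : basM c i t *ᵥ E t = mulEuler c E t *ᵥ Pi.single i 1 := by
    rw [← mulE_single, mulE_comm hW ht, mulEuler]
  have h2 : P t * mulEuler c E t = 1 := by simpa using hp.inv_P t ht
  rw [covE_apply hU hp.met E ht, hp.gam_eq hU hW ht, Matrix.sub_mulVec, ← Matrix.mulVec_mulVec,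
    h1, Matrix.mulVec_mulVec, Matrix.mul_assoc, h2, Matrix.mul_one, Pi.sub_apply, ← add_sub_assoc,
    ← covE_apply hU hW.met E ht]
  simp [tMat]

theorem PencilMember.covV_euler (hU : IsOpen U) (hW : IsWeakF U c g E e Einv Dt κ)
    (hp : PencilMember U c g E 0 h P) (ht : t ∈ U) (X : VF n) (a : Fin n) :
    covV h X E t a = ((Dt t - κ t) / 2) * X t a := by
  rw [covV_eq]
  simp only [← covE_apply hU hp.met E ht, hp.covE_eq hU hW ht, Matrix.smul_apply,
    Matrix.one_apply, smul_eq_mul]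
  simp [mul_comm]

/-! ### The Lie derivative of the connections -/

theorem dirM_mulEuler (hU : IsOpen U) (hW : IsWeakF U c g E e Einv Dt κ) (ht : t ∈ U) :
    dirM E (mulEuler c E) t
      = κ t • mulEuler c E t + jac E t * mulEuler c E t - mulEuler c E t * jac E t := by
  have h1 := dirM_contract hU hW.smooth_E (smooth_basM hW) ht
  simp only [dirM_basM hW ht, sub_add_cancel] at h1
  refine h1.trans ?_
  simp only [mulEuler, mulE, smul_add, smul_sub, Finset.sum_add_distrib, Finset.sum_sub_distrib,
    Finset.smul_sum, Finset.mul_sum, Finset.sum_mul, mul_smul_comm, smul_mul_assoc,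
    smul_comm (κ t)]

theorem PencilMember.inv_zero (hp : PencilMember U c g E 0 h P) (ht : t ∈ U) :
    P t * mulEuler c E t = 1 := by simpa using hp.inv_P t ht

theorem PencilMember.zero_inv (hp : PencilMember U c g E 0 h P) (ht : t ∈ U) :
    mulEuler c E t * P t = 1 := by simpa using hp.mul_inv ht

theorem PencilMember.dirM_P (hU : IsOpen U) (hW : IsWeakF U c g E e Einv Dt κ)
    (hp : PencilMember U c g E 0 h P) (ht : t ∈ U) :
    dirM E P t = jac E t * P t - P t * jac E t - κ t • P t := by
  have h1 := dirM_congr hU (fun s hs => hp.inv_zero hs) ht E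
  rw [dirM_mul hU hp.smooth_P (smooth_mulEuler hW) ht, dirM_const, dirM_mulEuler hU hW ht] at h1
  have h2 : dirM E P t = - (P t * (κ t • mulEuler c E t + jac E t * mulEuler c E t
      - mulEuler c E t * jac E t)) * P t := by
    rw [← eq_neg_of_add_eq_zero_left h1, Matrix.mul_assoc, hp.zero_inv ht, Matrix.mul_one]
  have h3 := hp.inv_zero ht
  have h4 := hp.zero_inv ht
  have h5 : ∀ Z, P t * (mulEuler c E t * Z) = Z := fun Z => by
    rw [← Matrix.mul_assoc, h3, Matrix.one_mul]
  rw [h2]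
  simp only [mul_add, add_mul, mul_sub, sub_mul, Matrix.mul_assoc, neg_mul, h4, h5,
    Matrix.mul_one, mul_smul_comm, smul_mul_assoc]
  abel

theorem PencilMember.lieGam_eq (hU : IsOpen U) (hW : IsWeakF U c g E e Einv Dt κ)
    (hp : PencilMember U c g E 0 h P) (ht : t ∈ U) (i : Fin n) :
    lieGam h E i t = lieGam g E i t
      - (∑ a, E t a • lieGam g E a t - (lieFun E (fun s => (Dt s - κ s) / 2) t) • 1)
        * (P t * basM c i t) := by
  have hT := smooth_tMat hU hW
  have hP := hp.smooth_P
  have hM := smooth_basM hW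
  have hD : ContDiffOn ℝ (⊤ : ℕ∞) (fun s => (Dt s - κ s) / 2) U :=
    (hW.smooth_Dt.sub hW.smooth_k).div_const 2
  have h1 : SmoothMet U (fun _ => (1 : Matrix (Fin n) (Fin n) ℝ)) := SmoothMet.const 1
  have hdT : dirM E (tMat g E Dt κ) t = jac E t * tMat g E Dt κ t - tMat g E Dt κ t * jac E t
      + (∑ a, E t a • lieGam g E a t - (lieFun E (fun s => (Dt s - κ s) / 2) t) • 1) := by
    have := dirM_sub hU (smooth_covE hU hW.met hW.smooth_E) (SmoothMet.smul hD h1) ht E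
    rw [dirM_smul hU hD h1 ht, dirM_const, smul_zero, add_zero,
      dirM_covE hU hW.met hW.smooth_E ht] at this
    refine this.trans ?_
    simp only [tMat, mul_sub, sub_mul, mul_smul_comm, smul_mul_assoc, Matrix.mul_one,
      Matrix.one_mul]
    abel
  have hdir : dirM E (gam h i) t = dirM E (gam g i) t
      - ((dirM E (tMat g E Dt κ) t * P t + tMat g E Dt κ t * dirM E P t) * basM c i t
        + tMat g E Dt κ t * P t * dirM E (basM c i) t) := by
    rw [dirM_congr hU (fun s hs => hp.gam_eq hU hW hs i) ht,
      dirM_sub hU (smooth_gam hU hW.met i) ((hT.mul hP).mul (hM i)) ht,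
      dirM_mul hU (hT.mul hP) (hM i) ht, dirM_mul hU hT hP ht]
  simp only [lieGam] at hdT ⊢
  rw [hdir, hdT, hp.dirM_P hU hW ht, dirM_basM hW ht]
  simp only [hp.gam_eq hU hW ht]
  generalize ∑ a, E t a • (dirM E (gam g a) t - jac E t * gam g a t + gam g a t * jac E t
    + ∑ b, jac E t b a • gam g b t + dM a (jac E) t)
    - lieFun E (fun s => (Dt s - κ s) / 2) t • (1 : Matrix (Fin n) (Fin n) ℝ) = V
  simp only [mul_add, add_mul, mul_sub, sub_mul, Matrix.mul_assoc, mul_smul_comm, smul_mul_assoc,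
    smul_sub, Finset.sum_sub_distrib, Finset.mul_sum]
  abel

/-- The Lie derivative of the Levi-Civita connection of the metric `G` along a conformal field,
where `u` is the gradient of the conformal factor. -/
def confMat (G : Matrix (Fin n) (Fin n) ℝ) (u : Fin n → ℝ) (i : Fin n) :
    Matrix (Fin n) (Fin n) ℝ :=
  (1/2 : ℝ) • (u i • 1 + vecMulVec (Pi.single i 1) u - vecMulVec (G⁻¹ *ᵥ u) (G i))

theorem lieGam_eq_confMat (hU : IsOpen U) (hg : IsMetricOn U g) (hE : SmoothVF U E)
    {φ : Pt n → ℝ} (hφ : ContDiffOn ℝ (⊤ : ℕ∞) φ U)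
    (hL : ∀ s ∈ U, dirM E g s + (jac E s)ᵀ * g s + g s * jac E s = φ s • g s) (ht : t ∈ U)
    (i : Fin n) : lieGam g E i t = confMat (g t) (fun l => pder l φ t) i := by
  ext k j
  rw [lieGam_conformal hU hg hE hφ hL ht]
  simp [confMat, vecMulVec_apply, Matrix.one_apply, Pi.single_apply, mul_comm]

theorem sum_smul_confMat (G : Matrix (Fin n) (Fin n) ℝ) (u x : Fin n → ℝ) :
    ∑ a, x a • confMat G u a
      = (1/2 : ℝ) • ((x ⬝ᵥ u) • 1 + vecMulVec x u - vecMulVec (G⁻¹ *ᵥ u) (x ᵥ* G)) := by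
  ext k j
  simp only [confMat, Matrix.sum_apply, Matrix.smul_apply, Matrix.sub_apply, Matrix.add_apply,
    vecMulVec_apply, smul_eq_mul, Pi.single_apply, vecMul, dotProduct, mul_sub, mul_add,
    Finset.sum_sub_distrib, Finset.sum_add_distrib, Finset.mul_sum, Finset.sum_mul]
  congr 1
  · congr 1
    · exact Finset.sum_congr rfl fun _ _ => by ring
    · simp
      ring
  · exact Finset.sum_congr rfl fun _ _ => by ring

theorem trace_confMat {G : Matrix (Fin n) (Fin n) ℝ} (hu : IsUnit G)
    (u : Fin n → ℝ) (i : Fin n) : (confMat G u i).trace = n / 2 * u i := by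
  have h1 : G i ⬝ᵥ (G⁻¹ *ᵥ u) = u i := by
    change (G *ᵥ (G⁻¹ *ᵥ u)) i = u i
    rw [Matrix.mulVec_mulVec, Matrix.mul_nonsing_inv _ ((Matrix.isUnit_iff_isUnit_det _).1 hu),
      Matrix.one_mulVec]
  simp only [confMat, Matrix.trace_smul, Matrix.trace_sub, Matrix.trace_add, Matrix.trace_one,
    Matrix.trace_vecMulVec, Fintype.card_fin, single_one_dotProduct, smul_eq_mul,
    dotProduct_comm _ (G i), h1]
  ring

theorem sum_confMat_mulVec (G : Matrix (Fin n) (Fin n) ℝ) {N : Matrix (Fin n) (Fin n) ℝ}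
    (hN : N.IsSymm) (u : Fin n → ℝ) :
    ∑ i, confMat G u i *ᵥ N i = N *ᵥ u - ((N * G).trace / 2) • (G⁻¹ *ᵥ u) := by
  have h1 : ∑ i, u i • N i = N *ᵥ u := by
    ext k
    simp only [Finset.sum_apply, Pi.smul_apply, smul_eq_mul, mulVec, dotProduct]
    exact Finset.sum_congr rfl fun i _ => by rw [hN.apply k i, mul_comm]
  have h2 : ∑ i, (u ⬝ᵥ N i) • (Pi.single i 1 : Fin n → ℝ) = N *ᵥ u := by
    ext k
    simp [Finset.sum_apply, Pi.single_apply, mulVec, dotProduct_comm]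
  have h3 : ∑ i, G i ⬝ᵥ N i = (N * G).trace := by
    simp only [Matrix.trace, Matrix.diag, Matrix.mul_apply, dotProduct]
    rw [Finset.sum_comm]
    exact Finset.sum_congr rfl fun i _ => Finset.sum_congr rfl fun j _ => by
      rw [hN.apply i j]; ring
  simp only [confMat, Matrix.smul_mulVec, Matrix.sub_mulVec, Matrix.add_mulVec,
    Matrix.one_mulVec, Matrix.vecMulVec_mulVec, op_smul_eq_smul, ← Finset.smul_sum,
    Finset.sum_sub_distrib, Finset.sum_add_distrib, h1, h2, ← Finset.sum_smul, h3]
  module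

/-! ### The difference of the conformal factors is constant -/

/-- The vector dual to the trace of the multiplication. -/
def traceVec (c : Mul2 n) (g : Met n) (t : Pt n) : Fin n → ℝ := ∑ i, basM c i t *ᵥ (g t)⁻¹ i

theorem inv_row {G : Matrix (Fin n) (Fin n) ℝ} (hG : G.IsSymm) (i : Fin n) :
    G⁻¹ i = G⁻¹ *ᵥ Pi.single i 1 := by
  have : G⁻¹.IsSymm := by rw [Matrix.IsSymm, Matrix.transpose_nonsing_inv, hG.eq]
  ext k
  simp [this.apply k i]

theorem dotProduct_traceVec (hW : IsWeakF U c g E e Einv Dt κ) (ht : t ∈ U) (x : Fin n → ℝ) :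
    (g t *ᵥ x) ⬝ᵥ traceVec c g t = (mulE c t x).trace := by
  have hg := hW.met.2 t ht
  have h1 : ∀ i, (g t *ᵥ x) ⬝ᵥ (basM c i t *ᵥ (g t)⁻¹ i) = (mulE c t x) i i := fun i => by
    rw [inv_row hg.1, Matrix.dotProduct_mulVec, ← Matrix.mulVec_transpose, Matrix.mulVec_mulVec,
      basM_adjoint hW ht, Matrix.dotProduct_mulVec, ← Matrix.mulVec_transpose,
      Matrix.transpose_nonsing_inv, hg.1.eq, Matrix.mulVec_mulVec, ← Matrix.mul_assoc,
      Matrix.nonsing_inv_mul _ ((Matrix.isUnit_iff_isUnit_det _).1 hg.2), Matrix.one_mul,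
      ← mulE_single, mulE_comm hW ht]
    simp
  simp only [traceVec, dotProduct_sum, h1]
  rfl

theorem PencilMember.mulE_col (hW : IsWeakF U c g E e Einv Dt κ)
    (hp : PencilMember U c g E 0 h P) (ht : t ∈ U) (i : Fin n) :
    mulE c t (P t *ᵥ Pi.single i 1) = P t * basM c i t := by
  have h1 : mulEuler c E t * mulE c t (P t *ᵥ Pi.single i 1) = basM c i t := by
    rw [mulEuler, mulE_mul hW ht, ← mulEuler, Matrix.mulVec_mulVec, hp.zero_inv ht,
      Matrix.one_mulVec, mulE_single]
  rw [← h1, ← Matrix.mul_assoc, hp.inv_zero ht, Matrix.one_mul]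

theorem PencilMember.mulVec_traceVec (hW : IsWeakF U c g E e Einv Dt κ)
    (hp : PencilMember U c g E 0 h P) (ht : t ∈ U) :
    h t *ᵥ traceVec c g t = fun i => (P t * basM c i t).trace := by
  ext i
  rw [← hp.mulE_col hW ht, ← dotProduct_traceVec hW ht, Matrix.mulVec_mulVec, ← hp.eq_mul t ht]
  simp only [mulVec, dotProduct]
  refine Finset.sum_congr rfl fun j _ => ?_
  simp [Pi.single_apply, (hp.met.2 t ht).1.apply i j]

theorem PencilMember.dotProduct_eq (hW : IsWeakF U c g E e Einv Dt κ)
    (hp : PencilMember U c g E 0 h P) (ht : t ∈ U) :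
    (h t *ᵥ E t) ⬝ᵥ traceVec c g t = n := by
  have h1 : (h t *ᵥ E t) ⬝ᵥ traceVec c g t = E t ⬝ᵥ (h t *ᵥ traceVec c g t) := by
    rw [Matrix.dotProduct_mulVec, ← Matrix.mulVec_transpose, (hp.met.2 t ht).1.eq]
  rw [h1, hp.mulVec_traceVec hW ht]
  have h2 : (∑ i, E t i • (P t * basM c i t)).trace = n := by
    have : ∑ i, E t i • (P t * basM c i t) = P t * mulEuler c E t := by
      simp only [mulEuler, mulE, Finset.mul_sum, mul_smul_comm]
    rw [this, hp.inv_zero ht, Matrix.trace_one, Fintype.card_fin]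
  simpa [Matrix.trace_sum, dotProduct] using h2

/-- The contraction of `∑ a, E a • confMat G u a` with an operator that is self-adjoint for `G`. -/
theorem trace_confMat_mul {G Q : Matrix (Fin n) (Fin n) ℝ} (hG : G.IsSymm) (hu : IsUnit G)
    (hQ : Qᵀ * G = G * Q) (u x : Fin n → ℝ) :
    ((∑ a, x a • confMat G u a) * Q).trace = (x ⬝ᵥ u) / 2 * Q.trace := by
  have h1 : (x ᵥ* G) ᵥ* Q = G *ᵥ (Q *ᵥ x) := by
    rw [Matrix.vecMul_vecMul, ← Matrix.mulVec_transpose, Matrix.transpose_mul, hG.eq, hQ,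
      Matrix.mulVec_mulVec]
  have h2 : (G⁻¹ *ᵥ u) ⬝ᵥ (G *ᵥ (Q *ᵥ x)) = u ⬝ᵥ (Q *ᵥ x) := by
    rw [Matrix.dotProduct_mulVec, ← Matrix.mulVec_transpose, hG.eq, Matrix.mulVec_mulVec,
      Matrix.mul_nonsing_inv _ ((Matrix.isUnit_iff_isUnit_det _).1 hu), Matrix.one_mulVec]
  have h3 : x ⬝ᵥ (u ᵥ* Q) = u ⬝ᵥ (Q *ᵥ x) := by
    rw [dotProduct_comm, Matrix.dotProduct_mulVec]
  simp only [sum_smul_confMat, smul_mul_assoc, sub_mul, add_mul, Matrix.one_mul,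
    Matrix.vecMulVec_mul, Matrix.trace_smul, Matrix.trace_sub, Matrix.trace_add,
    Matrix.trace_vecMulVec, h1, h2, h3, smul_eq_mul]
  ring

theorem sum_confMat_mulVec_eq {G : Matrix (Fin n) (Fin n) ℝ} (u x y : Fin n → ℝ) :
    (∑ a, x a • confMat G u a) *ᵥ y
      = (1/2 : ℝ) • ((x ⬝ᵥ u) • y + (u ⬝ᵥ y) • x - ((x ᵥ* G) ⬝ᵥ y) • (G⁻¹ *ᵥ u)) := by
  simp only [sum_smul_confMat, Matrix.smul_mulVec, Matrix.sub_mulVec, Matrix.add_mulVec,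
    Matrix.one_mulVec, Matrix.vecMulVec_mulVec, op_smul_eq_smul]

/-- The linear algebra behind the constancy of the rescaling function of the multiplication:
`u` and `w` are the gradients of the conformal factors of `g` and of `h`. -/
theorem PencilMember.gradient_eq (hn : 3 ≤ n) (hW : IsWeakF U c g E e Einv Dt κ)
    (hp : PencilMember U c g E 0 h P) (ht : t ∈ U) {u w : Fin n → ℝ}
    (hR : ∀ i, confMat (h t) w i = confMat (g t) u i
      - (∑ a, E t a • confMat (g t) u a - ((E t ⬝ᵥ w) / 2) • 1) * (P t * basM c i t))
    (hw : ∑ a, E t a • confMat (h t) w a = ((E t ⬝ᵥ w) / 2) • 1) : u = w := by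
  obtain ⟨hgs, hgu⟩ := hW.met.2 t ht
  obtain ⟨hhs, hhu⟩ := hp.met.2 t ht
  have hhd := (Matrix.isUnit_iff_isUnit_det _).1 hhu
  have hgd := (Matrix.isUnit_iff_isUnit_det _).1 hgu
  set δ := traceVec c g t with hδ
  set η := h t *ᵥ E t with hη
  have hτ := hp.mulVec_traceVec hW ht
  rw [← hδ] at hτ
  have hηδ : η ⬝ᵥ δ = n := hp.dotProduct_eq hW ht
  have hvη : E t ᵥ* h t = η := by rw [← Matrix.mulVec_transpose, hhs.eq]
  have hhinv : ∀ v, h t *ᵥ ((h t)⁻¹ *ᵥ v) = v := fun v => by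
    rw [Matrix.mulVec_mulVec, Matrix.mul_nonsing_inv _ hhd, Matrix.one_mulVec]
  -- the gradient of the conformal factor of `h` is proportional to `h E`
  have hwη : (n : ℝ) • w = (w ⬝ᵥ δ) • η := by
    have h1 := congrArg (fun N => h t *ᵥ (N *ᵥ δ)) hw
    simp only [sum_confMat_mulVec_eq, hvη, Matrix.smul_mulVec, Matrix.one_mulVec, hηδ,
      Matrix.mulVec_smul, Matrix.mulVec_sub, Matrix.mulVec_add, hhinv, ← hη] at h1
    linear_combination (norm := module) (-2 : ℝ) • h1
  -- the trace of the transformation law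
  have hT1 : (n : ℝ) • (u - w) = (E t ⬝ᵥ (u - w)) • (h t *ᵥ δ) := by
    ext i
    have hQ : (P t * basM c i t)ᵀ * g t = g t * (P t * basM c i t) := by
      rw [Matrix.transpose_mul, Matrix.mul_assoc, hp.adjoint hW ht, ← Matrix.mul_assoc,
        basM_adjoint hW ht, Matrix.mul_assoc, hp.commute_bas hW ht]
    have h1 := congrArg Matrix.trace (hR i)
    rw [Matrix.trace_sub, sub_mul, Matrix.trace_sub, trace_confMat hhu, trace_confMat hgu,
      trace_confMat_mul hgs hgu hQ, smul_mul_assoc, Matrix.one_mul, Matrix.trace_smul,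
      smul_eq_mul] at h1
    simp only [hτ, Pi.smul_apply, Pi.sub_apply, smul_eq_mul, dotProduct_sub]
    linear_combination (-2) * h1
  -- the contraction of the transformation law
  have hT2 : (1 - (n : ℝ) / 2) • w
      = u - ((u ⬝ᵥ δ) / 2) • η - ((E t ⬝ᵥ (u - w)) / 2) • (h t *ᵥ δ) := by
    have hA : (h t)⁻¹ = mulEuler c E t * (g t)⁻¹ := by simpa using hp.inv_eq hW ht
    have hsi : (h t)⁻¹.IsSymm := by rw [Matrix.IsSymm, Matrix.transpose_nonsing_inv, hhs.eq]
    have hcol : ∀ i, (P t * basM c i t) *ᵥ (h t)⁻¹ i = basM c i t *ᵥ (g t)⁻¹ i := fun i => by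
      rw [inv_row hhs, inv_row hgs, hA, Matrix.mulVec_mulVec, ← Matrix.mul_assoc,
        ← hp.commute_bas hW ht, Matrix.mul_assoc (basM c i t), hp.inv_zero ht, Matrix.mul_one,
        Matrix.mulVec_mulVec]
    have htr : (E t ᵥ* g t) ⬝ᵥ δ = ((h t)⁻¹ * g t).trace := by
      rw [← Matrix.mulVec_transpose, hgs.eq, hδ, dotProduct_traceVec hW ht, hA, Matrix.mul_assoc,
        Matrix.nonsing_inv_mul _ hgd, Matrix.mul_one]
      rfl
    have h1 : ∑ i, confMat (h t) w i *ᵥ (h t)⁻¹ i = ∑ i, confMat (g t) u i *ᵥ (h t)⁻¹ i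
        - (∑ a, E t a • confMat (g t) u a - ((E t ⬝ᵥ w) / 2) • 1) *ᵥ δ := by
      rw [hδ, traceVec, Matrix.mulVec_sum, ← Finset.sum_sub_distrib]
      refine Finset.sum_congr rfl fun i _ => ?_
      rw [hR i, Matrix.sub_mulVec, ← Matrix.mulVec_mulVec, hcol]
    rw [sum_confMat_mulVec _ hsi, sum_confMat_mulVec _ hsi, Matrix.nonsing_inv_mul _ hhd,
      Matrix.trace_one, Fintype.card_fin, Matrix.sub_mulVec, sum_confMat_mulVec_eq, htr,
      Matrix.smul_mulVec, Matrix.one_mulVec] at h1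
    have h2 := congrArg (fun v => h t *ᵥ v) h1
    simp only [Matrix.mulVec_sub, Matrix.mulVec_add, Matrix.mulVec_smul, hhinv, ← hη] at h2
    rw [dotProduct_sub]
    linear_combination (norm := module) h2
  have hk : ((n : ℝ) - 2) • (u - w) = - ((u - w) ⬝ᵥ δ) • η := by
    rw [sub_dotProduct]
    linear_combination (norm := module) (2 : ℝ) • hT2 + hwη + hT1
  have hn' : (3 : ℝ) ≤ n := by exact_mod_cast hn
  have hz : (u - w) ⬝ᵥ δ = 0 := by
    have h1 := congrArg (fun v => v ⬝ᵥ δ) hk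
    simp only [smul_dotProduct, hηδ, smul_eq_mul] at h1
    have h2 : (2 * (n : ℝ) - 2) * ((u - w) ⬝ᵥ δ) = 0 := by linear_combination h1
    exact (mul_eq_zero.1 h2).resolve_left (by linarith)
  rw [hz, neg_zero, zero_smul] at hk
  exact sub_eq_zero.1 ((smul_eq_zero.1 hk).resolve_left (by linarith))

theorem PencilMember.pder_eq (hn : 3 ≤ n) (hU : IsOpen U) (hW : IsWeakF U c g E e Einv Dt κ)
    (hp : PencilMember U c g E 0 h P) (ht : t ∈ U) :
    (fun l => pder l Dt t) = fun l => pder l (fun s => Dt s - κ s) t := by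
  have hD : ContDiffOn ℝ (⊤ : ℕ∞) (fun s => Dt s - κ s) U := hW.smooth_Dt.sub hW.smooth_k
  have hD2 : ContDiffOn ℝ (⊤ : ℕ∞) (fun s => (Dt s - κ s) / 2) U := hD.div_const 2
  have h1 : SmoothMet U (fun _ => (1 : Matrix (Fin n) (Fin n) ℝ)) := SmoothMet.const 1
  have hLg : ∀ s ∈ U, dirM E g s + (jac E s)ᵀ * g s + g s * jac E s = Dt s • g s :=
    fun s hs => conformal_metric hW hs
  have hLh : ∀ s ∈ U, dirM E h s + (jac E s)ᵀ * h s + h s * jac E s = (Dt s - κ s) • h s :=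
    fun s hs => by
      rw [lie_metric hU hp.met E hs, hp.covE_eq hU hW hs]
      simp only [Matrix.transpose_smul, Matrix.transpose_one, smul_mul_assoc, mul_smul_comm,
        Matrix.one_mul, Matrix.mul_one]
      module
  have hg := lieGam_eq_confMat hU hW.met hW.smooth_E hW.smooth_Dt hLg ht
  have hh := lieGam_eq_confMat hU hp.met hW.smooth_E hD hLh ht
  have hlie : lieFun E (fun s => (Dt s - κ s) / 2) t
      = (E t ⬝ᵥ fun l => pder l (fun s => Dt s - κ s) t) / 2 := by
    simp only [lieFun, dotProduct, Finset.sum_div]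
    simp only [div_eq_mul_inv]
    refine Finset.sum_congr rfl fun i _ => ?_
    rw [pder_mul (diffAt hU hD ht) (differentiableAt_const _), pder_const]
    ring
  refine hp.gradient_eq hn hW ht (fun i => ?_) ?_
  · have := hp.lieGam_eq hU hW ht i
    simpa only [hg, hh, hlie] using this
  · have h2 := dirM_covE hU hp.met hW.smooth_E ht
    rw [dirM_congr hU (fun s hs => hp.covE_eq hU hW hs) ht, dirM_smul hU hD2 h1 ht, dirM_const,
      smul_zero, add_zero, hp.covE_eq hU hW ht] at h2
    simp only [mul_smul_comm, smul_mul_assoc, Matrix.mul_one, Matrix.one_mul, sub_self, zero_add,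
      hh, hlie] at h2
    exact h2.symm

theorem PencilMember.exists_const (hn : 3 ≤ n) (hU : IsOpen U) (hUc : IsConnected U)
    (hW : IsWeakF U c g E e Einv Dt κ) (hp : PencilMember U c g E 0 h P) :
    ∃ c₀ : ℝ, ∀ s ∈ U, κ s = c₀ := by
  refine hU.exists_is_const_of_fderiv_eq_zero hUc.isPreconnected
    (hW.smooth_k.differentiableOn (by simp)) fun s hs => ?_
  refine ContinuousLinearMap.coe_injective (LinearMap.pi_ext' fun i => LinearMap.ext_ring ?_)
  have h1 := congrFun (hp.pder_eq hn hU hW hs) i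
  rw [pder_sub (diffAt hU hW.smooth_Dt hs) (diffAt hU hW.smooth_k hs)] at h1
  have h2 : pder i κ s = 0 := by linarith
  simpa [pder] using h2

end WeakF

/-- Conversely, a connected weak F-manifold (U, •, h̃, E) of dimension ≥ 3
determines, via h*(h̃ X) = E • X, a weak quasi-homogeneous pencil (h, h̃) with Euler
vector field E (in particular the pair (h, h̃) is compatible). -/
theorem stmt3 {n : ℕ} (hn : 3 ≤ n) (U : Set (Pt n)) (hUopen : IsOpen U)
    (hUconn : IsConnected U)
    (c : Mul2 n) (h' : Met n) (E e Einv : VF n) (Dt k : Pt n → ℝ)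
    (hW : IsWeakF U c h' E e Einv Dt k)
    (h : Met n) (hmet : IsMetricOn U h)
    (hdef : ∀ t ∈ U, ∀ a j, (∑ l, (h t)⁻¹ a l * h' t l j) = ∑ i, c t a i j * E t i) :
    ∃ D : Pt n → ℝ, IsWQH U h h' E D Dt := by
  have hdef' : ∀ s ∈ U, (h s)⁻¹ * h' s = WeakF.mulEuler c E s := fun s hs => by
    ext a j
    rw [Matrix.mul_apply, hdef s hs a j, WeakF.mulEuler, WeakF.mulE_apply]
    exact Finset.sum_congr rfl fun i _ => mul_comm _ _
  have hp := WeakF.PencilMember.of_inv (lam := 0) hW hmet fun s hs => by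
    rw [hdef' s hs, zero_smul, add_zero]
  obtain ⟨c₀, hc₀⟩ := hp.exists_const hn hUopen hUconn hW
  exact ⟨fun s => Dt s - k s,
    { met_h := hmet
      met_h' := hW.met
      compat := WeakF.compatible_of_isWeakF hUopen hW hmet hdef'
      smooth_E := hW.smooth_E
      smooth_D := hW.smooth_Dt.sub hW.smooth_k
      smooth_Dt := hW.smooth_Dt
      lie_h' := hW.lie_g
      cov_E := fun X _ t ht a => hp.covV_euler hUopen hW ht X a
      diff_const := ⟨c₀, fun s hs => by rw [sub_sub_cancel, hc₀ s hs]⟩ }⟩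
end
end
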